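/- (Local boundedness) Let V ∈ L^p(Ω) with 1 < p < ∞ and V ≥ 0 a.e., let f ∈ L²(Ω), and let u ∈ H₀(Ω) be a weak solution of −(y^{2α₁}∂ₓ²u + x^{2α₂}∂_y²u) + V u = f, i.e. a(u,v) = ∫_Ω f v dxdy for all v ∈ H₀(Ω). Then for every point s₀ ∈ Ω and r > 0 with the closed ball B_{4r}(s₀) contained in Ω, there exists a constant C > 0 such that ess sup_{B_r(s₀)} |u| ≤ C (‖u‖_{L²(B_{2r}(s₀))} + ‖f‖_{L²(Ω)}). -/

import Mathlib

open MeasureTheory Set Filter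

noncomputable section

/-- The open unit square `Ω = (0,1) × (0,1)` in `ℝ²`. -/
def Omega : Set (ℝ × ℝ) := Ioo (0:ℝ) 1 ×ˢ Ioo (0:ℝ) 1

/-- Test functions on a set `s`: smooth with compact support contained in `s`. -/
def IsTestOn (s : Set (ℝ × ℝ)) (φ : ℝ × ℝ → ℝ) : Prop :=
  ContDiff ℝ (⊤ : ℕ∞) φ ∧ HasCompactSupport φ ∧ tsupport φ ⊆ s

/-- Classical partial derivative in the `x`-direction. -/
def pdx (φ : ℝ × ℝ → ℝ) (p : ℝ × ℝ) : ℝ := fderiv ℝ φ p (1, 0)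

/-- Classical partial derivative in the `y`-direction. -/
def pdy (φ : ℝ × ℝ → ℝ) (p : ℝ × ℝ) : ℝ := fderiv ℝ φ p (0, 1)

/-- `g` is a weak `x`-partial derivative of `u` on `s`. -/
def HasWeakDerivXOn (s : Set (ℝ × ℝ)) (u g : ℝ × ℝ → ℝ) : Prop :=
  LocallyIntegrableOn u s volume ∧ LocallyIntegrableOn g s volume ∧
  ∀ φ : ℝ × ℝ → ℝ, IsTestOn s φ →
    ∫ p in s, u p * pdx φ p = - ∫ p in s, g p * φ p

/-- `g` is a weak `y`-partial derivative of `u` on `s`. -/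
def HasWeakDerivYOn (s : Set (ℝ × ℝ)) (u g : ℝ × ℝ → ℝ) : Prop :=
  LocallyIntegrableOn u s volume ∧ LocallyIntegrableOn g s volume ∧
  ∀ φ : ℝ × ℝ → ℝ, IsTestOn s φ →
    ∫ p in s, u p * pdy φ p = - ∫ p in s, g p * φ p

/-- Test functions on `Ω`. -/
def IsTest (φ : ℝ × ℝ → ℝ) : Prop := IsTestOn Omega φ

/-- Membership in the weighted Sobolev space `𝓗¹(Ω)`, with weak derivatives `gx, gy`:
`u ∈ L²(Ω)`, `gx = ∂ₓu`, `gy = ∂_y u` weakly, and `y^α₁ gx, x^α₂ gy ∈ L²(Ω)`. -/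
structure MemH1 (α₁ α₂ : ℝ) (u gx gy : ℝ × ℝ → ℝ) : Prop where
  memL2 : MemLp u 2 (volume.restrict Omega)
  weakX : HasWeakDerivXOn Omega u gx
  weakY : HasWeakDerivYOn Omega u gy
  wgx : MemLp (fun p => p.2 ^ α₁ * gx p) 2 (volume.restrict Omega)
  wgy : MemLp (fun p => p.1 ^ α₂ * gy p) 2 (volume.restrict Omega)

/-- The `𝓗¹(Ω)` norm of `u` (with weak derivatives `gx, gy`). -/
def H1Norm (α₁ α₂ : ℝ) (u gx gy : ℝ × ℝ → ℝ) : ℝ :=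
  Real.sqrt ((∫ p in Omega, (u p) ^ 2) +
    (∫ p in Omega, (p.2 ^ α₁ * gx p) ^ 2) +
    (∫ p in Omega, (p.1 ^ α₂ * gy p) ^ 2))

/-- Membership in `𝓗₀¹(Ω)`: member of `𝓗¹(Ω)` approximable in the `𝓗¹` norm by
test functions. -/
def MemH10 (α₁ α₂ : ℝ) (u gx gy : ℝ × ℝ → ℝ) : Prop :=
  MemH1 α₁ α₂ u gx gy ∧
  ∀ ε : ℝ, 0 < ε → ∃ φ : ℝ × ℝ → ℝ, IsTest φ ∧
    H1Norm α₁ α₂ (fun p => u p - φ p) (fun p => gx p - pdx φ p)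
      (fun p => gy p - pdy φ p) < ε

/-- Membership in `H₀(Ω) = {u ∈ 𝓗₀¹(Ω) : ∫_Ω V u² < ∞}`. -/
def MemH0 (α₁ α₂ : ℝ) (V u gx gy : ℝ × ℝ → ℝ) : Prop :=
  MemH10 α₁ α₂ u gx gy ∧
  IntegrableOn (fun p => V p * (u p) ^ 2) Omega volume

/-- The bilinear form `a(u,v)` associated with the sub-elliptic operator with potential `V`. -/
def aForm (α₁ α₂ : ℝ) (V u gx gy v hx hy : ℝ × ℝ → ℝ) : ℝ :=
  ∫ p in Omega, ((p.2 ^ α₁ * gx p) * (p.2 ^ α₁ * hx p) +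
    (p.1 ^ α₂ * gy p) * (p.1 ^ α₂ * hy p) + V p * u p * v p)

/-- The bilinear form `a₁(u,v)` (no potential). -/
def a1Form (α₁ α₂ : ℝ) (u gx gy v hx hy : ℝ × ℝ → ℝ) : ℝ :=
  ∫ p in Omega, ((p.2 ^ α₁ * gx p) * (p.2 ^ α₁ * hx p) +
    (p.1 ^ α₂ * gy p) * (p.1 ^ α₂ * hy p))

/-- Membership in `S_p = {V ∈ L^p(Ω) : V ≥ 0 a.e., ‖V‖_{L^p(Ω)} ≤ M}`. -/
def MemSp (ppow M : ℝ) (V : ℝ × ℝ → ℝ) : Prop :=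
  MemLp V (ENNReal.ofReal ppow) (volume.restrict Omega) ∧
  (∀ᵐ p ∂(volume.restrict Omega), 0 ≤ V p) ∧
  eLpNorm V (ENNReal.ofReal ppow) (volume.restrict Omega) ≤ ENNReal.ofReal M

/-- `u` (with weak derivatives `gx, gy`) is an eigenfunction of the sub-elliptic operator
with potential `V` for the eigenvalue `lam`. -/
def IsEigenfun (α₁ α₂ : ℝ) (V : ℝ × ℝ → ℝ) (lam : ℝ) (u gx gy : ℝ × ℝ → ℝ) : Prop :=
  MemH0 α₁ α₂ V u gx gy ∧
  ∀ v hx hy : ℝ × ℝ → ℝ, MemH0 α₁ α₂ V v hx hy →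
    aForm α₁ α₂ V u gx gy v hx hy = lam * ∫ p in Omega, u p * v p

/-- The first eigenvalue `λ₁(V) = inf { a(u,u) : u ∈ H₀(Ω), ‖u‖_{L²} = 1 }`. -/
def lam1 (α₁ α₂ : ℝ) (V : ℝ × ℝ → ℝ) : ℝ :=
  sInf { r | ∃ u gx gy : ℝ × ℝ → ℝ, MemH0 α₁ α₂ V u gx gy ∧
    (∫ p in Omega, (u p) ^ 2) = 1 ∧ r = aForm α₁ α₂ V u gx gy u gx gy }

/-- `sup { a(u,u) : u ∈ span(φ), ‖u‖_{L²(Ω)} = 1 }` for a finite family `φ` with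
weak derivatives `φx, φy`. -/
def rayleighSup (α₁ α₂ : ℝ) (V : ℝ × ℝ → ℝ) {k : ℕ} (φ φx φy : Fin k → ℝ × ℝ → ℝ) : ℝ :=
  sSup { s | ∃ c : Fin k → ℝ,
    (∫ p in Omega, (∑ i, c i * φ i p) ^ 2) = 1 ∧
    s = aForm α₁ α₂ V (fun p => ∑ i, c i * φ i p) (fun p => ∑ i, c i * φx i p)
      (fun p => ∑ i, c i * φy i p) (fun p => ∑ i, c i * φ i p)
      (fun p => ∑ i, c i * φx i p) (fun p => ∑ i, c i * φy i p) }

/-- The set of values `sup { a(u,u) : u ∈ E, ‖u‖ = 1 }` over `k`-dimensional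
subspaces `E` of `H₀(Ω)` (represented by `L²(Ω)`-linearly independent families of
`k` elements of `H₀(Ω)`). -/
def minmaxSet (α₁ α₂ : ℝ) (V : ℝ × ℝ → ℝ) (k : ℕ) : Set ℝ :=
  { r | ∃ φ φx φy : Fin k → ℝ × ℝ → ℝ,
      (∀ i, MemH0 α₁ α₂ V (φ i) (φx i) (φy i)) ∧
      (∀ c : Fin k → ℝ, (∀ᵐ p ∂(volume.restrict Omega), ∑ i, c i * φ i p = 0) → c = 0) ∧
      r = rayleighSup α₁ α₂ V φ φx φy }

/-- The `k`-th eigenvalue via the min-max principle. -/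
def lamk (α₁ α₂ : ℝ) (V : ℝ × ℝ → ℝ) (k : ℕ) : ℝ := sInf (minmaxSet α₁ α₂ V k)

/-- Membership in `U = (𝓗₀¹(Ω) ∩ L^{2q}(Ω)) \ {0}`. -/
def MemU (α₁ α₂ qe : ℝ) (u gx gy : ℝ × ℝ → ℝ) : Prop :=
  MemH10 α₁ α₂ u gx gy ∧
  MemLp u (ENNReal.ofReal (2 * qe)) (volume.restrict Omega) ∧
  ¬ (∀ᵐ p ∂(volume.restrict Omega), u p = 0)

/-- The functional `J(u) = (a₁(u,u) + M ‖u‖_{L^{2q}(Ω)}²) / ‖u‖_{L²(Ω)}²`. -/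
def Jfun (α₁ α₂ M qe : ℝ) (u gx gy : ℝ × ℝ → ℝ) : ℝ :=
  (a1Form α₁ α₂ u gx gy u gx gy +
    M * (∫ p in Omega, |u p| ^ (2 * qe)) ^ (1 / qe)) / (∫ p in Omega, (u p) ^ 2)

section Aux

lemma iter_vanish (Φ : ℝ → ℝ) (hΦ0 : ∀ k, 0 ≤ Φ k) (hanti : Antitone Φ) (h1 : Φ 0 ≤ 1)
    (K m : ℝ) (hK : 0 ≤ K) (hm : 2 < m)
    (h : ∀ k d, 0 ≤ k → 0 < d → Φ (k + d) ≤ K * d ^ (-m) * Φ k ^ (m / 2)) :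
    ∃ M : ℝ, 0 ≤ M ∧ Φ M = 0 := by
  set β := m / 2 with hβ
  have hβ1 : 0 < β - 1 := by rw [hβ]; linarith
  set ρ : ℝ := 2 ^ (-m / (β - 1)) with hρ
  have hρ0 : 0 < ρ := by positivity
  have hρ1 : ρ < 1 := by
    apply Real.rpow_lt_one_of_one_lt_of_neg (by norm_num)
    apply div_neg_of_neg_of_pos <;> linarith
  have hρ2 : (2:ℝ) ^ m * ρ ^ β = ρ := by
    have : ρ ^ β = ρ * ρ ^ (β - 1) := by
      rw [← Real.rpow_one_add' hρ0.le (by linarith)]; congr 1; ring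
    rw [this, hρ, ← Real.rpow_mul (by norm_num), div_mul_cancel₀ _ hβ1.ne', Real.rpow_neg (by norm_num)]
    have : (2:ℝ)^m ≠ 0 := by positivity
    field_simp
  obtain ⟨D, hD0, hD⟩ : ∃ D : ℝ, 0 < D ∧ K * D ^ (-m) ≤ ρ := by
    have ht : Tendsto (fun D : ℝ => K * D ^ (-m)) atTop (nhds (K * 0)) :=
      (tendsto_rpow_neg_atTop (by linarith)).const_mul K
    rw [mul_zero] at ht
    have := (ht.eventually (gt_mem_nhds hρ0)).and (eventually_gt_atTop 0)
    obtain ⟨D, h1, h2⟩ := this.exists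
    exact ⟨D, h2, h1.le⟩
  have key : ∀ j : ℕ, Φ (2 * D * (1 - (1/2) ^ j)) ≤ ρ ^ j := by
    intro j
    induction j with
    | zero => simpa using h1
    | succ j ih =>
      have hd : 0 < D * (1/2:ℝ) ^ j := by positivity
      have hk : 0 ≤ 2 * D * (1 - (1/2:ℝ) ^ j) := by
        have : (1/2:ℝ) ^ j ≤ 1 := pow_le_one₀ (by norm_num) (by norm_num)
        have : 0 ≤ 1 - (1/2:ℝ) ^ j := by linarith
        positivity
      have h3 := h _ _ hk hd
      have e : 2 * D * (1 - (1/2:ℝ) ^ j) + D * (1/2:ℝ) ^ j = 2 * D * (1 - (1/2) ^ (j+1)) := by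
        rw [pow_succ]; ring
      rw [e] at h3
      refine h3.trans ?_
      have h4 : Φ (2 * D * (1 - (1/2:ℝ) ^ j)) ^ β ≤ (ρ ^ j) ^ β :=
        Real.rpow_le_rpow (hΦ0 _) ih (by linarith)
      have h5 : (D * (1/2:ℝ) ^ j) ^ (-m) = D ^ (-m) * ((2:ℝ) ^ m) ^ j := by
        rw [Real.mul_rpow hD0.le (by positivity)]
        congr 1
        rw [one_div, inv_pow, Real.rpow_neg (by positivity), Real.inv_rpow (by positivity), inv_inv,
          ← Real.rpow_natCast, ← Real.rpow_natCast, ← Real.rpow_mul (by norm_num), ← Real.rpow_mul (by norm_num), mul_comm]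
      have h6 : (ρ ^ j) ^ β = (ρ ^ β) ^ j := by
        rw [← Real.rpow_natCast, ← Real.rpow_natCast, ← Real.rpow_mul hρ0.le, ← Real.rpow_mul hρ0.le, mul_comm]
      calc K * (D * (1/2:ℝ) ^ j) ^ (-m) * Φ (2 * D * (1 - (1/2:ℝ) ^ j)) ^ β
          ≤ K * (D * (1/2:ℝ) ^ j) ^ (-m) * (ρ ^ j) ^ β := by gcongr
        _ = (K * D ^ (-m)) * ((2:ℝ) ^ m * ρ ^ β) ^ j := by rw [h5, h6, mul_pow]; ring
        _ = (K * D ^ (-m)) * ρ ^ j := by rw [hρ2]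
        _ ≤ ρ * ρ ^ j := by gcongr
        _ = ρ ^ (j+1) := by ring
  refine ⟨2 * D, by positivity, le_antisymm ?_ (hΦ0 _)⟩
  refine ge_of_tendsto' (tendsto_pow_atTop_nhds_zero_of_lt_one hρ0.le hρ1) (fun j => ?_)
  refine (hanti ?_).trans (key j)
  have : 0 ≤ (1/2:ℝ)^j := by positivity
  nlinarith

/-- odd smooth truncation -/
noncomputable def Gtr (k d t : ℝ) : ℝ :=
  d * (Real.smoothTransition ((t - k) / d) - Real.smoothTransition ((-t - k) / d))

lemma deriv_smoothTransition_bound : ∃ L : ℝ, 0 < L ∧ ∀ t,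
    0 ≤ deriv Real.smoothTransition t ∧ deriv Real.smoothTransition t ≤ L := by
  have hc : Continuous (deriv Real.smoothTransition) :=
    (Real.smoothTransition.contDiff (n := 1)).continuous_deriv le_rfl
  obtain ⟨C, hC⟩ := (isCompact_Icc (a := (0:ℝ)) (b := 1)).exists_bound_of_continuousOn hc.continuousOn
  refine ⟨max C 1, by positivity, fun t => ⟨?_, ?_⟩⟩
  · exact Real.smoothTransition.monotone.deriv_nonneg
  · by_cases ht : t ∈ Icc (0:ℝ) 1
    · exact (le_abs_self _).trans ((hC t ht).trans (le_max_left _ _))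
    · have : deriv Real.smoothTransition t = 0 := by
        by_cases h0 : t < 0
        · have : Real.smoothTransition =ᶠ[nhds t] fun _ => 0 := by
            filter_upwards [gt_mem_nhds h0] with y hy
            exact Real.smoothTransition.zero_of_nonpos hy.le
          rw [this.deriv_eq]; simp
        · have h1 : 1 < t := by
            by_contra h; exact ht ⟨not_lt.1 h0, not_lt.1 h⟩
          have : Real.smoothTransition =ᶠ[nhds t] fun _ => 1 := by
            filter_upwards [lt_mem_nhds h1] with y hy
            exact Real.smoothTransition.one_of_one_le hy.le
          rw [this.deriv_eq]; simp
      rw [this]; positivity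

lemma Gtr_contDiff (k d : ℝ) : ContDiff ℝ (⊤ : ℕ∞) (Gtr k d) := by
  unfold Gtr
  refine contDiff_const.mul (ContDiff.sub ?_ ?_)
  · exact Real.smoothTransition.contDiff.comp (by fun_prop)
  · exact Real.smoothTransition.contDiff.comp (by fun_prop)

lemma Gtr_deriv : ∃ L : ℝ, 0 < L ∧ ∀ k d t, 0 < d →
    0 ≤ deriv (Gtr k d) t ∧ deriv (Gtr k d) t ≤ L := by
  obtain ⟨L, hL, h⟩ := deriv_smoothTransition_bound
  refine ⟨2 * L, by positivity, fun k d t hd => ?_⟩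
  have hS : ∀ z, HasDerivAt Real.smoothTransition (deriv Real.smoothTransition z) z := fun z =>
    ((Real.smoothTransition.contDiff (n := 1)).differentiable (by norm_num) z).hasDerivAt
  have h1 : HasDerivAt (fun t : ℝ => (t - k) / d) (1 / d) t :=
    ((hasDerivAt_id t).sub_const k).div_const d
  have h2 : HasDerivAt (fun t : ℝ => (-t - k) / d) (-1 / d) t :=
    (((hasDerivAt_id t).neg).sub_const k).div_const d
  have h3 := (((hS _).comp t h1).sub ((hS _).comp t h2)).const_mul d
  have h4 : deriv (Gtr k d) t = deriv Real.smoothTransition ((t - k) / d) +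
      deriv Real.smoothTransition ((-t - k) / d) := by
    have := h3.deriv
    have e : Gtr k d = fun y => d * ((Real.smoothTransition ∘ fun t => (t - k) / d) - Real.smoothTransition ∘ fun t => (-t - k) / d) y := rfl
    rw [e, this]; field_simp; ring
  rw [h4]
  have := h ((t - k) / d)
  have := h ((-t - k) / d)
  constructor <;> linarith

lemma Gtr_zero (k d t : ℝ) (hd : 0 < d) (ht : |t| ≤ k) : Gtr k d t = 0 := by
  have := abs_le.1 ht
  unfold Gtr
  rw [Real.smoothTransition.zero_of_nonpos, Real.smoothTransition.zero_of_nonpos]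
  · simp
  · exact div_nonpos_of_nonpos_of_nonneg (by linarith) hd.le
  · exact div_nonpos_of_nonpos_of_nonneg (by linarith) hd.le

lemma Gtr_pos (k d t : ℝ) (hk : 0 ≤ k) (hd : 0 < d) (ht : 0 ≤ t) :
    Gtr k d t = d * Real.smoothTransition ((t - k) / d) := by
  unfold Gtr
  rw [Real.smoothTransition.zero_of_nonpos (x := (-t - k) / d)]
  · simp
  · exact div_nonpos_of_nonpos_of_nonneg (by linarith) hd.le

lemma Gtr_neg (k d t : ℝ) : Gtr k d (-t) = - Gtr k d t := by
  unfold Gtr; simp; ring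

lemma Gtr_abs (k d t : ℝ) : |Gtr k d t| = |Gtr k d (|t|)| := by
  rcases le_total 0 t with h | h
  · rw [abs_of_nonneg h]
  · rw [abs_of_nonpos h, Gtr_neg, abs_neg]

lemma Gtr_le (k d t : ℝ) (hk : 0 ≤ k) (hd : 0 < d) : |Gtr k d t| ≤ d := by
  rw [Gtr_abs, Gtr_pos _ _ _ hk hd (abs_nonneg _), abs_of_nonneg (mul_nonneg hd.le (Real.smoothTransition.nonneg _))]
  exact mul_le_of_le_one_right hd.le (Real.smoothTransition.le_one _)

lemma Gtr_eq (k d t : ℝ) (hk : 0 ≤ k) (hd : 0 < d) (ht : k + d ≤ |t|) : |Gtr k d t| = d := by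
  rw [Gtr_abs, Gtr_pos _ _ _ hk hd (abs_nonneg _), Real.smoothTransition.one_of_one_le]
  · simp [abs_of_pos hd]
  · rw [le_div_iff₀ hd]; linarith

lemma Gtr_mul (k d t : ℝ) (hk : 0 ≤ k) (hd : 0 < d) : 0 ≤ t * Gtr k d t := by
  rcases le_total 0 t with h | h
  · rw [Gtr_pos _ _ _ hk hd h]
    exact mul_nonneg h (mul_nonneg hd.le (Real.smoothTransition.nonneg _))
  · have := Gtr_pos k d (-t) hk hd (by linarith)
    rw [Gtr_neg] at this
    have h2 := (mul_nonneg hd.le (Real.smoothTransition.nonneg ((-t - k) / d)))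
    exact mul_nonneg_of_nonpos_of_nonpos h (by linarith)
open scoped ENNReal

lemma sob_one (s α : ℝ) (hs : 1 < s) (h2 : 2 * α * s < 1) : ∃ c : ℝ≥0∞, c ≠ ⊤ ∧
    ∀ (ψ D : ℝ → ℝ → ℝ≥0∞) (A B : ℝ → ℝ≥0∞),
      Measurable (Function.uncurry ψ) → Measurable (Function.uncurry D) → Measurable A → Measurable B →
      (∀ x y, ψ x y ^ (2 * s) ≤ A y) → (∀ x y, ψ x y ^ (2 * s) ≤ B x) →
      (∀ x y, y ∉ Ioo (0:ℝ) 1 → ψ x y = 0) →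
      (∫⁻ x, ∫⁻ y, ψ x y ^ (2 * s - 1) * D x y) ^ (2:ℝ) ≤
        c * (∫⁻ x, B x) * (∫⁻ y, A y) ^ (1 - 1 / s) *
          ∫⁻ x, ∫⁻ y, (ENNReal.ofReal (y ^ α) * D x y) ^ (2:ℝ) := by
  refine ⟨(∫⁻ y in Ioo (0:ℝ) 1, ENNReal.ofReal (y ^ (-(2 * α * s)))) ^ (1 / s), ?_, ?_⟩
  · refine ENNReal.rpow_ne_top_of_nonneg (by positivity) ?_
    have : IntegrableOn (fun y : ℝ => y ^ (-(2 * α * s))) (Ioo 0 1) :=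
      (intervalIntegral.integrableOn_Ioo_rpow_iff zero_lt_one).2 (by linarith)
    exact (this.lintegral_lt_top).ne
  intro ψ D A B hψ hD hA hB hψA hψB hsupp
  set W : ℝ → ℝ≥0∞ := fun y => ENNReal.ofReal (y ^ α) with hW
  have hWm : Measurable W := by fun_prop
  set U : ℝ → ℝ≥0∞ := (Ioo (0:ℝ) 1).indicator (fun y => ENNReal.ofReal (y ^ (-α))) with hU
  have hUm : Measurable U := by
    refine Measurable.indicator ?_ measurableSet_Ioo
    fun_prop
  have hs0 : 0 < s := by linarith
  -- pointwise factorization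
  have hfac : ∀ x y, ψ x y ^ (2 * s - 1) * D x y = (ψ x y ^ (2 * s - 1) * U y) * (W y * D x y) := by
    intro x y
    by_cases hy : y ∈ Ioo (0:ℝ) 1
    · have : U y * W y = 1 := by
        simp only [hU, hW, indicator_of_mem hy]
        rw [← ENNReal.ofReal_mul (Real.rpow_nonneg hy.1.le _), ← Real.rpow_add hy.1]; simp
      calc _ = ψ x y ^ (2 * s - 1) * (U y * W y) * D x y := by rw [this, mul_one]
        _ = _ := by ring
    · rw [hsupp x y hy, ENNReal.zero_rpow_of_pos (by linarith)]; simp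
  have hprod : ∀ F : ℝ → ℝ → ℝ≥0∞, Measurable (Function.uncurry F) →
      ∫⁻ x, ∫⁻ y, F x y = ∫⁻ p : ℝ × ℝ, F p.1 p.2 ∂(volume.prod volume) := by
    intro F hF
    exact (lintegral_prod (fun p : ℝ × ℝ => F p.1 p.2) hF.aemeasurable).symm
  have hψ' : Measurable fun p : ℝ × ℝ => ψ p.1 p.2 := hψ
  have hD' : Measurable fun p : ℝ × ℝ => D p.1 p.2 := hD
  have m1 : Measurable fun p : ℝ × ℝ => ψ p.1 p.2 ^ (2 * s - 1) * U p.2 := by fun_prop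
  have m2 : Measurable fun p : ℝ × ℝ => W p.2 * D p.1 p.2 := by fun_prop
  have hh : (2:ℝ).HolderConjugate 2 := Real.HolderConjugate.two_two
  have step1 : (∫⁻ x, ∫⁻ y, ψ x y ^ (2 * s - 1) * D x y) ^ (2:ℝ) ≤
      (∫⁻ x, ∫⁻ y, (ψ x y ^ (2 * s - 1) * U y) ^ (2:ℝ)) *
        ∫⁻ x, ∫⁻ y, (W y * D x y) ^ (2:ℝ) := by
    simp_rw [hfac]
    rw [hprod (fun x y => (ψ x y ^ (2 * s - 1) * U y) * (W y * D x y)) (m1.mul m2),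
      hprod (fun x y => (ψ x y ^ (2 * s - 1) * U y) ^ (2:ℝ)) (m1.pow_const _),
      hprod (fun x y => (W y * D x y) ^ (2:ℝ)) (m2.pow_const _)]
    have := ENNReal.lintegral_mul_le_Lp_mul_Lq (volume.prod volume) hh m1.aemeasurable m2.aemeasurable
    refine (ENNReal.rpow_le_rpow this (by norm_num : (0:ℝ) ≤ 2)).trans ?_
    rw [ENNReal.mul_rpow_of_nonneg _ _ (by norm_num), ← ENNReal.rpow_mul, ← ENNReal.rpow_mul]
    norm_num
  refine step1.trans ?_
  gcongr
  -- inner estimate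
  have hU2 : ∀ y, U y ^ (2 * s) = (Ioo (0:ℝ) 1).indicator (fun y => ENNReal.ofReal (y ^ (-(2 * α * s)))) y := by
    intro y
    by_cases hy : y ∈ Ioo (0:ℝ) 1
    · simp only [hU, indicator_of_mem hy]
      rw [ENNReal.ofReal_rpow_of_nonneg (Real.rpow_nonneg hy.1.le _) (by linarith), ← Real.rpow_mul hy.1.le]
      congr 2; ring
    · simp only [hU, indicator_of_notMem hy]
      exact ENNReal.zero_rpow_of_pos (by linarith)
  have hconj : (s / (s - 1)).HolderConjugate s :=
    (Real.HolderConjugate.conjExponent hs).symm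
  have hinner : ∀ x, ∫⁻ y, (ψ x y ^ (2 * s - 1) * U y) ^ (2:ℝ) ≤
      B x * ((∫⁻ y, A y) ^ (1 - 1 / s) * (∫⁻ y in Ioo (0:ℝ) 1, ENNReal.ofReal (y ^ (-(2 * α * s)))) ^ (1 / s)) := by
    intro x
    have hp : ∀ y, (ψ x y ^ (2 * s - 1) * U y) ^ (2:ℝ) ≤ B x * (A y ^ (1 - 1 / s) * U y ^ (2:ℝ)) := by
      intro y
      rw [ENNReal.mul_rpow_of_nonneg _ _ (by norm_num), ← mul_assoc]
      gcongr
      calc (ψ x y ^ (2 * s - 1)) ^ (2:ℝ) = ψ x y ^ (2 * s) * (ψ x y ^ (2 * s)) ^ (1 - 1 / s) := by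
            rw [← ENNReal.rpow_mul, ← ENNReal.rpow_mul, ← ENNReal.rpow_add_of_nonneg _ _ (by linarith)]
            · congr 1; field_simp; ring
            · have : 1 / s ≤ 1 := by rw [div_le_one hs0]; exact hs.le
              have : 0 ≤ 1 - 1 / s := by linarith
              positivity
        _ ≤ B x * A y ^ (1 - 1 / s) := by
            gcongr
            · exact hψB x y
            · have : 1 / s ≤ 1 := by rw [div_le_one hs0]; exact hs.le
              linarith
            · exact hψA x y
    refine (lintegral_mono hp).trans ?_
    rw [lintegral_const_mul _ (by fun_prop)]
    gcongr
    have := ENNReal.lintegral_mul_le_Lp_mul_Lq volume hconj (f := fun y => A y ^ (1 - 1 / s))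
      (g := fun y => U y ^ (2:ℝ)) (by fun_prop) (by fun_prop)
    refine this.trans (le_of_eq ?_)
    have e1 : 1 / (s / (s - 1)) = 1 - 1 / s := by field_simp
    have e2 : (1 - 1 / s) * (s / (s - 1)) = 1 := by
      have : s - 1 ≠ 0 := by linarith
      field_simp
    simp_rw [← ENNReal.rpow_mul, hU2, e1, e2, ENNReal.rpow_one]
    rw [lintegral_indicator measurableSet_Ioo]
  refine (lintegral_mono hinner).trans (le_of_eq ?_)
  rw [lintegral_mul_const _ hB]
  ring

lemma sob_real (s X Y c1 c2 a b : ℝ) (hs : 1 < s) (hX : 0 ≤ X) (hY : 0 ≤ Y) (hc1 : 0 ≤ c1) (hc2 : 0 ≤ c2)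
    (ha : 0 ≤ a) (hb : 0 ≤ b)
    (h1 : X ^ (2:ℝ) ≤ c1 * Y * X ^ (1 - 1 / s) * a) (h2 : Y ^ (2:ℝ) ≤ c2 * X * Y ^ (1 - 1 / s) * b) :
    X * Y ≤ (c1 * c2) ^ s * (a + b) ^ (2 * s) := by
  rcases (mul_nonneg hX hY).eq_or_lt with h0 | h0
  · rw [← h0]; positivity
  have hX0 : 0 < X := lt_of_le_of_ne hX (by rintro rfl; simp at h0)
  have hY0 : 0 < Y := lt_of_le_of_ne hY (by rintro rfl; simp at h0)
  have h3 : (X * Y) ^ (2:ℝ) ≤ (c1 * c2 * (a * b)) * (X * Y) ^ (2 - 1 / s) := by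
    have : (X * Y) ^ (2 - 1 / s) = (X * Y) * (X ^ (1 - 1/s) * Y ^ (1 - 1 / s)) := by
      rw [← Real.mul_rpow hX hY]
      nth_rewrite 2 [← Real.rpow_one (X * Y)]
      rw [← Real.rpow_add h0]; congr 1; ring
    rw [this, Real.mul_rpow hX hY]
    calc _ ≤ (c1 * Y * X ^ (1 - 1 / s) * a) * (c2 * X * Y ^ (1 - 1 / s) * b) := by gcongr
      _ = _ := by ring
  have h4 : (X * Y) ^ (1 / s) ≤ c1 * c2 * (a * b) := by
    have : (X * Y) ^ (2:ℝ) = (X * Y) ^ (1 / s) * (X * Y) ^ (2 - 1 / s) := by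
      rw [← Real.rpow_add h0]; congr 1; ring
    rw [this] at h3
    exact le_of_mul_le_mul_right h3 (by positivity)
  have hs0 : 0 < s := by linarith
  calc X * Y = ((X * Y) ^ (1 / s)) ^ s := by
        rw [← Real.rpow_mul h0.le, one_div_mul_cancel hs0.ne', Real.rpow_one]
    _ ≤ (c1 * c2 * (a * b)) ^ s := by gcongr
    _ ≤ (c1 * c2 * (a + b) ^ (2:ℝ)) ^ s := by
        gcongr
        have : (a + b) ^ (2:ℝ) = (a+b)^2 := by norm_cast
        rw [this]; nlinarith [mul_nonneg ha hb]
    _ = _ := by rw [Real.mul_rpow (by positivity) (by positivity), ← Real.rpow_mul (by positivity)]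

lemma slice_bound (m : ℝ) (hm : 1 < m) (g : ℝ → ℝ) (hg : ContDiff ℝ 1 g) (hc : HasCompactSupport g) (x : ℝ) :
    ‖g x‖ₑ ^ m ≤ ∫⁻ t, ENNReal.ofReal m * (‖g t‖ₑ ^ (m - 1) * ‖deriv g t‖ₑ) := by
  have h1 : ContDiff ℝ 1 (fun t => ‖g t‖ ^ m) := (contDiff_norm_rpow hm).comp hg
  have h2 : HasCompactSupport (fun t => ‖g t‖ ^ m) := by
    refine hc.comp_left (g := fun z : ℝ => ‖z‖ ^ m) ?_
    simp [Real.zero_rpow (by linarith : m ≠ 0)]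
  have h3 := h2.enorm_le_lintegral_Ici_deriv h1 x
  have e1 : ‖(‖g x‖ ^ m)‖ₑ = ‖g x‖ₑ ^ m := by
    rw [Real.enorm_eq_ofReal (by positivity), ← ENNReal.ofReal_rpow_of_nonneg (by positivity) (by linarith),
      ofReal_norm]
  rw [e1] at h3
  refine h3.trans ((setLIntegral_le_lintegral _ _).trans (lintegral_mono fun t => ?_))
  have h4 : HasDerivAt (fun t => ‖g t‖ ^ m) ((m * |g t| ^ (m - 2) * g t) * deriv g t) t := by
    have := (hasDerivAt_abs_rpow (g t) hm).comp t (hg.differentiable (by norm_num) t).hasDerivAt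
    exact this
  rw [h4.deriv, enorm_mul, ← mul_assoc]
  gcongr
  have : ‖m * |g t| ^ (m - 2) * g t‖ = m * ‖g t‖ ^ (m - 1) := by
    rw [norm_mul, norm_mul, Real.norm_of_nonneg (by linarith : 0 ≤ m), mul_assoc]
    congr 1
    rw [Real.norm_of_nonneg (by positivity)]
    by_cases h0 : g t = 0
    · simp [h0, Real.zero_rpow (by linarith : m - 1 ≠ 0)]
    · have : 0 < |g t| := abs_pos.2 h0
      rw [Real.norm_eq_abs]
      nth_rewrite 2 [← Real.rpow_one |g t|]
      rw [← Real.rpow_add this]; congr 1; ring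
  rw [← ofReal_norm, this, ENNReal.ofReal_mul (by linarith), ← ENNReal.ofReal_rpow_of_nonneg (by positivity) (by linarith),
      ofReal_norm]

lemma IsTest.zero {φ : ℝ × ℝ → ℝ} (h : IsTest φ) {p : ℝ × ℝ} (hp : p ∉ Omega) : φ p = 0 :=
  image_eq_zero_of_notMem_tsupport fun hh => hp (h.2.2 hh)

lemma measurableSet_Omega : MeasurableSet Omega := measurableSet_Ioo.prod measurableSet_Ioo

lemma IsTest.pdx_cont {φ : ℝ × ℝ → ℝ} (h : IsTest φ) : Continuous (pdx φ) :=
  (h.1.continuous_fderiv (by simp)).clm_apply continuous_const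

lemma IsTest.pdy_cont {φ : ℝ × ℝ → ℝ} (h : IsTest φ) : Continuous (pdy φ) :=
  (h.1.continuous_fderiv (by simp)).clm_apply continuous_const

lemma IsTest.pdx_cs {φ : ℝ × ℝ → ℝ} (h : IsTest φ) : HasCompactSupport (pdx φ) :=
  h.2.1.fderiv_apply (𝕜 := ℝ) (1, 0)

lemma IsTest.pdy_cs {φ : ℝ × ℝ → ℝ} (h : IsTest φ) : HasCompactSupport (pdy φ) :=
  h.2.1.fderiv_apply (𝕜 := ℝ) (0, 1)

lemma IsTest.pdx_zero {φ : ℝ × ℝ → ℝ} (h : IsTest φ) {p : ℝ × ℝ} (hp : p ∉ Omega) : pdx φ p = 0 := by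
  unfold pdx
  rw [fderiv_of_notMem_tsupport (𝕜 := ℝ) fun hh => hp (h.2.2 hh)]; simp

lemma IsTest.pdy_zero {φ : ℝ × ℝ → ℝ} (h : IsTest φ) {p : ℝ × ℝ} (hp : p ∉ Omega) : pdy φ p = 0 := by
  unfold pdy
  rw [fderiv_of_notMem_tsupport (𝕜 := ℝ) fun hh => hp (h.2.2 hh)]; simp

lemma finite_XY (m : ℝ) (hm : 1 < m) (φ g : ℝ × ℝ → ℝ) (hφ : Continuous φ) (hg : Continuous g)
    (hgc : HasCompactSupport g) :
    ∫⁻ p, ‖φ p‖ₑ ^ (m - 1) * ‖g p‖ₑ ≠ ⊤ := by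
  have hc : Continuous (fun p => ‖φ p‖ ^ (m - 1) * g p) :=
    ((hφ.norm).rpow_const (fun _ => Or.inr (by linarith))).mul hg
  have hi : Integrable (fun p => ‖φ p‖ ^ (m - 1) * g p) :=
    hc.integrable_of_hasCompactSupport (HasCompactSupport.mul_left hgc)
  have := hi.2
  rw [hasFiniteIntegral_iff_enorm] at this
  refine ne_of_lt (lt_of_le_of_lt (lintegral_mono fun p => ?_) this)
  rw [enorm_mul, Real.enorm_eq_ofReal (r := ‖φ p‖ ^ (m - 1)) (by positivity), ← ENNReal.ofReal_rpow_of_nonneg (by positivity) (by linarith),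
      ofReal_norm]

lemma weight_integral (w g : ℝ × ℝ → ℝ) (hz : ∀ p, p ∉ Omega → g p = 0)
    (hw0 : ∀ p ∈ Omega, 0 ≤ w p)
    (hi : Integrable (fun p => (w p * g p) ^ 2) (volume.restrict Omega)) :
    ∫⁻ p, (ENNReal.ofReal (w p) * ‖g p‖ₑ) ^ (2:ℝ) =
      ENNReal.ofReal (∫ p in Omega, (w p * g p) ^ 2) := by
  rw [ofReal_integral_eq_lintegral_ofReal hi (ae_of_all _ fun p => sq_nonneg _)]
  rw [← lintegral_indicator measurableSet_Omega]
  refine lintegral_congr fun p => ?_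
  by_cases hp : p ∈ Omega
  · rw [indicator_of_mem hp, ← ofReal_norm, ← ENNReal.ofReal_mul (hw0 p hp),
      ENNReal.ofReal_rpow_of_nonneg (mul_nonneg (hw0 p hp) (norm_nonneg _)) (by norm_num)]
    congr 1
    rw [← sq_abs (w p * g p), abs_mul, abs_of_nonneg (hw0 p hp)]
    norm_cast
  · rw [indicator_of_notMem hp, hz p hp]; simp

instance : IsFiniteMeasure ((volume : Measure (ℝ × ℝ)).restrict Omega) := by
  refine ⟨?_⟩
  rw [Measure.restrict_apply_univ, Omega, Measure.volume_eq_prod, Measure.prod_prod]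
  simp

lemma Omega_weight1 {α : ℝ} (hα : 0 < α) {p : ℝ × ℝ} (hp : p ∈ Omega) :
    0 < p.2 ^ α ∧ p.2 ^ α ≤ 1 :=
  ⟨Real.rpow_pos_of_pos hp.2.1 _, Real.rpow_le_one hp.2.1.le hp.2.2.le hα.le⟩

lemma Omega_weight2 {α : ℝ} (hα : 0 < α) {p : ℝ × ℝ} (hp : p ∈ Omega) :
    0 < p.1 ^ α ∧ p.1 ^ α ≤ 1 :=
  ⟨Real.rpow_pos_of_pos hp.1.1 _, Real.rpow_le_one hp.1.1.le hp.1.2.le hα.le⟩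

lemma memLp_weight (w g : ℝ × ℝ → ℝ) (hw : Measurable w) (hw1 : ∀ p ∈ Omega, 0 < w p ∧ w p ≤ 1)
    (hg : Continuous g) (hgc : HasCompactSupport g) :
    MemLp (fun p => w p * g p) 2 (volume.restrict Omega) := by
  obtain ⟨C, hC⟩ := hg.bounded_above_of_compact_support hgc
  refine MemLp.of_bound (C := C) (hw.mul hg.measurable).aestronglyMeasurable ?_
  filter_upwards [ae_restrict_mem measurableSet_Omega] with p hp
  rw [norm_mul, Real.norm_of_nonneg (hw1 p hp).1.le]
  calc w p * ‖g p‖ ≤ 1 * ‖g p‖ := by gcongr; exact (hw1 p hp).2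
    _ ≤ C := by simpa using hC p

lemma sobolev (α₁ α₂ : ℝ) (hα₁ : α₁ ∈ Ioo (0:ℝ) (1/2)) (hα₂ : α₂ ∈ Ioo (0:ℝ) (1/2)) :
    ∃ s : ℝ, 1 < s ∧ ∃ K : ℝ, 0 ≤ K ∧ ∀ φ : ℝ × ℝ → ℝ, IsTest φ →
      ∫ p in Omega, |φ p| ^ (4 * s) ≤
        K * ((∫ p in Omega, (p.2 ^ α₁ * pdx φ p) ^ 2) +
          (∫ p in Omega, (p.1 ^ α₂ * pdy φ p) ^ 2)) ^ (2 * s) := by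
  obtain ⟨s, hs, hs1, hs2⟩ : ∃ s : ℝ, 1 < s ∧ 2 * α₁ * s < 1 ∧ 2 * α₂ * s < 1 := by
    have h1 : 1 < min (1 / (2 * α₁)) (1 / (2 * α₂)) := by
      refine lt_min ?_ ?_
      · rw [lt_div_iff₀ (by linarith [hα₁.1])]; linarith [hα₁.2]
      · rw [lt_div_iff₀ (by linarith [hα₂.1])]; linarith [hα₂.2]
    obtain ⟨s, h2, h3⟩ := exists_between h1
    refine ⟨s, h2, ?_, ?_⟩
    · have := h3.trans_le (min_le_left _ _)
      rw [lt_div_iff₀ (by linarith [hα₁.1])] at this; linarith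
    · have := h3.trans_le (min_le_right _ _)
      rw [lt_div_iff₀ (by linarith [hα₂.1])] at this; linarith
  obtain ⟨c1, hc1, H1⟩ := sob_one s α₁ hs hs1
  obtain ⟨c2, hc2, H2⟩ := sob_one s α₂ hs hs2
  set m := 2 * s with hm
  have hm1 : 1 < m := by linarith
  refine ⟨s, hs, ((m ^ (2:ℝ) * c1.toReal) * (m ^ (2:ℝ) * c2.toReal)) ^ s, by positivity, fun φ hφ => ?_⟩
  have hφc : Continuous φ := hφ.1.continuous
  have hφ1 : ContDiff ℝ 1 φ := hφ.1.of_le (by exact_mod_cast le_top)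
  set ψ : ℝ → ℝ → ℝ≥0∞ := fun x y => ‖φ (x, y)‖ₑ with hψ
  set Dx : ℝ → ℝ → ℝ≥0∞ := fun x y => ‖pdx φ (x, y)‖ₑ with hDx
  set Dy : ℝ → ℝ → ℝ≥0∞ := fun x y => ‖pdy φ (x, y)‖ₑ with hDy
  have mψ : Measurable (Function.uncurry ψ) := hφc.measurable.enorm
  have mDx : Measurable (Function.uncurry Dx) := hφ.pdx_cont.measurable.enorm
  have mDy : Measurable (Function.uncurry Dy) := hφ.pdy_cont.measurable.enorm
  have mIx : Measurable (Function.uncurry fun x y => ψ x y ^ (m - 1) * Dx x y) :=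
    (mψ.pow_const _).mul mDx
  have mIy : Measurable (Function.uncurry fun x y => ψ x y ^ (m - 1) * Dy x y) :=
    (mψ.pow_const _).mul mDy
  set A : ℝ → ℝ≥0∞ := fun y => ∫⁻ x, ENNReal.ofReal m * (ψ x y ^ (m - 1) * Dx x y) with hA
  set B : ℝ → ℝ≥0∞ := fun x => ∫⁻ y, ENNReal.ofReal m * (ψ x y ^ (m - 1) * Dy x y) with hB
  have mA : Measurable A := (mIx.const_mul _).lintegral_prod_left'
  have mB : Measurable B := (mIy.const_mul _).lintegral_prod_right'
  have hψA : ∀ x y, ψ x y ^ m ≤ A y := by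
    intro x y
    have h := slice_bound m hm1 (fun x => φ (x, y)) (hφ1.comp (by fun_prop))
      (HasCompactSupport.intro isCompact_Icc (K := Icc 0 1) fun t ht =>
        hφ.zero fun hh => ht ⟨hh.1.1.le, hh.1.2.le⟩) x
    refine h.trans (le_of_eq ?_)
    refine lintegral_congr fun t => ?_
    have : deriv (fun x => φ (x, y)) t = pdx φ (t, y) := by
      have h1 := (hφ1.differentiable (by norm_num) (t, y)).hasFDerivAt
      have h2 : HasDerivAt (fun x : ℝ => (x, y)) ((1:ℝ), (0:ℝ)) t :=
        (hasDerivAt_id t).prodMk (hasDerivAt_const t y)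
      exact (h1.comp_hasDerivAt t h2).deriv
    rw [this]
  have hψB : ∀ x y, ψ x y ^ m ≤ B x := by
    intro x y
    have h := slice_bound m hm1 (fun y => φ (x, y)) (hφ1.comp (by fun_prop))
      (HasCompactSupport.intro isCompact_Icc (K := Icc 0 1) fun t ht =>
        hφ.zero fun hh => ht ⟨hh.2.1.le, hh.2.2.le⟩) y
    refine h.trans (le_of_eq ?_)
    refine lintegral_congr fun t => ?_
    have : deriv (fun y => φ (x, y)) t = pdy φ (x, t) := by
      have h1 := (hφ1.differentiable (by norm_num) (x, t)).hasFDerivAt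
      have h2 : HasDerivAt (fun y : ℝ => (x, y)) ((0:ℝ), (1:ℝ)) t :=
        (hasDerivAt_const t x).prodMk (hasDerivAt_id t)
      exact (h1.comp_hasDerivAt t h2).deriv
    rw [this]
  have hprod : ∀ F : ℝ × ℝ → ℝ≥0∞, Measurable F →
      ∫⁻ x, ∫⁻ y, F (x, y) = ∫⁻ p : ℝ × ℝ, F p := by
    intro F hF
    rw [Measure.volume_eq_prod]
    exact (lintegral_prod F hF.aemeasurable).symm
  have hprod2 : ∀ F : ℝ × ℝ → ℝ≥0∞, Measurable F →
      ∫⁻ y, ∫⁻ x, F (x, y) = ∫⁻ p : ℝ × ℝ, F p := by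
    intro F hF
    rw [Measure.volume_eq_prod]
    exact (lintegral_prod_symm F hF.aemeasurable).symm
  set X0 := ∫⁻ p : ℝ × ℝ, ‖φ p‖ₑ ^ (m - 1) * ‖pdx φ p‖ₑ with hX0
  set Y0 := ∫⁻ p : ℝ × ℝ, ‖φ p‖ₑ ^ (m - 1) * ‖pdy φ p‖ₑ with hY0
  have hX0t : X0 ≠ ⊤ := finite_XY m hm1 φ (pdx φ) hφc hφ.pdx_cont hφ.pdx_cs
  have hY0t : Y0 ≠ ⊤ := finite_XY m hm1 φ (pdy φ) hφc hφ.pdy_cont hφ.pdy_cs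
  have hXA : ∫⁻ y, A y = ENNReal.ofReal m * X0 := by
    exact (hprod2 _ (mIx.const_mul _)).trans (lintegral_const_mul _ mIx)
  have hYB : ∫⁻ x, B x = ENNReal.ofReal m * Y0 := by
    exact (hprod _ (mIy.const_mul _)).trans (lintegral_const_mul _ mIy)
  set a := ∫ p in Omega, (p.2 ^ α₁ * pdx φ p) ^ 2 with ha
  set b := ∫ p in Omega, (p.1 ^ α₂ * pdy φ p) ^ 2 with hb
  have ha0 : 0 ≤ a := integral_nonneg fun p => sq_nonneg _
  have hb0 : 0 ≤ b := integral_nonneg fun p => sq_nonneg _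
  have mw1 : Measurable fun p : ℝ × ℝ => p.2 ^ α₁ := by fun_prop
  have mw2 : Measurable fun p : ℝ × ℝ => p.1 ^ α₂ := by fun_prop
  have E1 := weight_integral (fun p => p.2 ^ α₁) (pdx φ) (fun p hp => hφ.pdx_zero hp)
    (fun p hp => (Omega_weight1 hα₁.1 hp).1.le)
    (memLp_weight _ _ mw1 (fun p hp => Omega_weight1 hα₁.1 hp) hφ.pdx_cont hφ.pdx_cs).integrable_sq
  have E2 := weight_integral (fun p => p.1 ^ α₂) (pdy φ) (fun p hp => hφ.pdy_zero hp)
    (fun p hp => (Omega_weight2 hα₂.1 hp).1.le)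
    (memLp_weight _ _ mw2 (fun p hp => Omega_weight2 hα₂.1 hp) hφ.pdy_cont hφ.pdy_cs).integrable_sq
  have I1 := H1 ψ Dx A B mψ mDx mA mB hψA hψB (fun x y hy => by
    simp only [hψ]; rw [hφ.zero fun hh => hy hh.2]; simp)
  have I2 := H2 (fun y x => ψ x y) (fun y x => Dy x y) B A (mψ.comp measurable_swap)
    (mDy.comp measurable_swap) mB mA (fun y x => hψB x y) (fun y x => hψA x y) (fun y x hx => by
    simp only [hψ]; rw [hφ.zero fun hh => hx hh.1]; simp)
  rw [hprod (fun p => ‖φ p‖ₑ ^ (m - 1) * ‖pdx φ p‖ₑ) mIx,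
    hprod (fun p => (ENNReal.ofReal (p.2 ^ α₁) * ‖pdx φ p‖ₑ) ^ (2:ℝ))
      (((mw1.ennreal_ofReal).mul mDx).pow_const _), E1] at I1
  rw [hprod2 (fun p => ‖φ p‖ₑ ^ (m - 1) * ‖pdy φ p‖ₑ) mIy,
    hprod2 (fun p => (ENNReal.ofReal (p.1 ^ α₂) * ‖pdy φ p‖ₑ) ^ (2:ℝ))
      (((mw2.ennreal_ofReal).mul mDy).pow_const _), E2] at I2
  rw [hXA, hYB] at I1 I2
  rw [← ha] at I1
  rw [← hb] at I2
  have hexp : 0 ≤ 1 - 1 / s := by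
    have : 1 / s ≤ 1 := by rw [div_le_one (by linarith)]; exact hs.le
    linarith
  have conv : ∀ (c P Q : ℝ≥0∞) (e : ℝ), c ≠ ⊤ → P ≠ ⊤ → Q ≠ ⊤ → 0 ≤ e →
      P ^ (2:ℝ) ≤ c * (ENNReal.ofReal m * Q) * (ENNReal.ofReal m * P) ^ (1 - 1 / s) * ENNReal.ofReal e →
      (m * P.toReal) ^ (2:ℝ) ≤ (m ^ (2:ℝ) * c.toReal) * (m * Q.toReal) * (m * P.toReal) ^ (1 - 1 / s) * e := by
    intro c P Q e hc hP hQ he h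
    have h' := ENNReal.toReal_mono (by
      refine ENNReal.mul_ne_top (ENNReal.mul_ne_top (ENNReal.mul_ne_top hc (ENNReal.mul_ne_top (by simp) hQ)) ?_) (by simp)
      exact ENNReal.rpow_ne_top_of_nonneg hexp (ENNReal.mul_ne_top (by simp) hP)) h
    simp only [ENNReal.toReal_mul, ← ENNReal.toReal_rpow, ENNReal.toReal_ofReal he,
      ENNReal.toReal_ofReal (by linarith : 0 ≤ m)] at h'
    rw [Real.mul_rpow (by linarith) ENNReal.toReal_nonneg]
    calc m ^ (2:ℝ) * P.toReal ^ (2:ℝ) ≤ m ^ (2:ℝ) * (c.toReal * (m * Q.toReal) * (m * P.toReal) ^ (1 - 1 / s) * e) := by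
          gcongr
      _ = _ := by ring
  have J1 := conv c1 X0 Y0 a hc1 hX0t hY0t ha0 I1
  have J2 := conv c2 Y0 X0 b hc2 hY0t hX0t hb0 I2
  have J := sob_real s (m * X0.toReal) (m * Y0.toReal) _ _ a b hs (by positivity) (by positivity)
    (by positivity) (by positivity) ha0 hb0 J1 J2
  refine le_trans ?_ J
  have L1 : ∫⁻ p : ℝ × ℝ, ‖φ p‖ₑ ^ (4 * s) ≤ (∫⁻ x, B x) * (∫⁻ y, A y) := by
    rw [← lintegral_prod_mul mB.aemeasurable mA.aemeasurable, Measure.volume_eq_prod]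
    refine lintegral_mono fun p => ?_
    have : (4 * s) = m + m := by rw [hm]; ring
    rw [this, ENNReal.rpow_add_of_nonneg _ _ (by linarith) (by linarith)]
    exact mul_le_mul' (hψB p.1 p.2) (hψA p.1 p.2)
  have L2 : ∫ p in Omega, |φ p| ^ (4 * s) = (∫⁻ p in Omega, ‖φ p‖ₑ ^ (4 * s)).toReal := by
    rw [integral_eq_lintegral_of_nonneg_ae (ae_of_all _ fun p => by positivity)
      ((hφc.abs.rpow_const fun _ => Or.inr (by linarith)).aestronglyMeasurable)]
    congr 1
    refine lintegral_congr fun p => ?_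
    rw [← ENNReal.ofReal_rpow_of_nonneg (by positivity) (by linarith), ← Real.norm_eq_abs, ofReal_norm]
  rw [L2]
  have L3 := (setLIntegral_le_lintegral Omega (fun p => ‖φ p‖ₑ ^ (4 * s))).trans L1
  rw [hXA, hYB] at L3
  have L4 := ENNReal.toReal_mono (ENNReal.mul_ne_top (ENNReal.mul_ne_top (by simp) hY0t)
    (ENNReal.mul_ne_top (by simp) hX0t)) L3
  refine L4.trans (le_of_eq ?_)
  simp only [ENNReal.toReal_mul, ENNReal.toReal_ofReal (by linarith : 0 ≤ m)]
  ring

lemma CS {X : Type*} [MeasurableSpace X] {μ : Measure X} {f g : X → ℝ} (hf : MemLp f 2 μ) (hg : MemLp g 2 μ) :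
    |∫ p, f p * g p ∂μ| ≤ Real.sqrt (∫ p, f p ^ 2 ∂μ) * Real.sqrt (∫ p, g p ^ 2 ∂μ) := by
  have h := integral_mul_norm_le_Lp_mul_Lq (μ := μ) (f := f) (g := g) Real.HolderConjugate.two_two
    (by simpa using hf) (by simpa using hg)
  have h1 : |∫ p, f p * g p ∂μ| ≤ ∫ p, ‖f p‖ * ‖g p‖ ∂μ := by
    have h2 : ‖∫ p, f p * g p ∂μ‖ ≤ ∫ p, ‖f p * g p‖ ∂μ := norm_integral_le_integral_norm _
    simpa only [norm_mul, Real.norm_eq_abs] using h2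
  refine h1.trans (h.trans (le_of_eq ?_))
  rw [Real.sqrt_eq_rpow, Real.sqrt_eq_rpow]
  simp only [Real.norm_eq_abs]
  norm_cast
  simp only [sq_abs]

lemma isTest_comp {φ : ℝ × ℝ → ℝ} (hφ : IsTest φ) {G : ℝ → ℝ} (hG : ContDiff ℝ (⊤ : ℕ∞) G) (hG0 : G 0 = 0) :
    IsTest (fun p => G (φ p)) := by
  refine ⟨hG.comp hφ.1, hφ.2.1.comp_left hG0, (closure_mono ?_).trans hφ.2.2⟩
  intro p hp h0
  exact hp (by simp [h0, hG0])

lemma fderiv_comp_test {φ : ℝ × ℝ → ℝ} (hφ : IsTest φ) {G : ℝ → ℝ} (hG : ContDiff ℝ (⊤ : ℕ∞) G)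
    (p e : ℝ × ℝ) : fderiv ℝ (fun p => G (φ p)) p e = deriv G (φ p) * fderiv ℝ φ p e := by
  have h1 : HasDerivAt G (deriv G (φ p)) (φ p) := (hG.differentiable (by simp) _).hasDerivAt
  have h2 := (hφ.1.differentiable (by simp) p).hasFDerivAt
  have := (h1.comp_hasFDerivAt p h2).fderiv
  have e1 : fderiv ℝ (fun p => G (φ p)) p = deriv G (φ p) • fderiv ℝ φ p := this
  rw [e1]; simp

lemma approx {α₁ α₂ : ℝ} (hα₁ : 0 < α₁) (hα₂ : 0 < α₂) {u gx gy : ℝ × ℝ → ℝ} (hu : MemH10 α₁ α₂ u gx gy) :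
    ∃ φ : ℕ → ℝ × ℝ → ℝ, (∀ n, IsTest (φ n)) ∧
      Tendsto (fun n => ∫ p in Omega, (p.2 ^ α₁ * (gx p - pdx (φ n) p)) ^ 2) atTop (nhds 0) ∧
      Tendsto (fun n => ∫ p in Omega, (p.1 ^ α₂ * (gy p - pdy (φ n) p)) ^ 2) atTop (nhds 0) ∧
      ∀ᵐ p ∂(volume.restrict Omega), Tendsto (fun n => φ n p) atTop (nhds (u p)) := by
  have hpos : ∀ n : ℕ, (0:ℝ) < 1 / ((n:ℝ) + 1) := fun n => Nat.one_div_pos_of_nat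
  choose φ hφ hφn using fun n : ℕ => hu.2 _ (hpos n)
  have hlim : Tendsto (fun n : ℕ => (1 / ((n:ℝ) + 1)) ^ 2) atTop (nhds 0) := by
    simpa using (tendsto_one_div_add_atTop_nhds_zero_nat (𝕜 := ℝ)).pow 2
  have hsum : ∀ n, (∫ p in Omega, (u p - φ n p) ^ 2) +
    (∫ p in Omega, (p.2 ^ α₁ * (gx p - pdx (φ n) p)) ^ 2) +
    (∫ p in Omega, (p.1 ^ α₂ * (gy p - pdy (φ n) p)) ^ 2) < (1 / ((n:ℝ) + 1)) ^ 2 := by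
    intro n
    exact (Real.sqrt_lt' (hpos n)).1 (hφn n)
  have i1 : ∀ n, 0 ≤ ∫ p in Omega, (u p - φ n p) ^ 2 := fun n => integral_nonneg fun p => sq_nonneg _
  have i2 : ∀ n, 0 ≤ ∫ p in Omega, (p.2 ^ α₁ * (gx p - pdx (φ n) p)) ^ 2 :=
    fun n => integral_nonneg fun p => sq_nonneg _
  have i3 : ∀ n, 0 ≤ ∫ p in Omega, (p.1 ^ α₂ * (gy p - pdy (φ n) p)) ^ 2 :=
    fun n => integral_nonneg fun p => sq_nonneg _
  have t1 : Tendsto (fun n => ∫ p in Omega, (u p - φ n p) ^ 2) atTop (nhds 0) :=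
    squeeze_zero i1 (fun n => by linarith [hsum n, i1 n, i2 n, i3 n]) hlim
  have t2 : Tendsto (fun n => ∫ p in Omega, (p.2 ^ α₁ * (gx p - pdx (φ n) p)) ^ 2) atTop (nhds 0) :=
    squeeze_zero i2 (fun n => by linarith [hsum n, i1 n, i2 n, i3 n]) hlim
  have t3 : Tendsto (fun n => ∫ p in Omega, (p.1 ^ α₂ * (gy p - pdy (φ n) p)) ^ 2) atTop (nhds 0) :=
    squeeze_zero i3 (fun n => by linarith [hsum n, i1 n, i2 n, i3 n]) hlim
  have hint : ∀ n, Integrable (fun p => (u p - φ n p) ^ 2) (volume.restrict Omega) := by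
    intro n
    have : MemLp (φ n) 2 (volume.restrict Omega) :=
      (((hφ n).1.continuous).memLp_of_hasCompactSupport (hφ n).2.1 (p := 2) (μ := volume)).restrict _
    exact (hu.1.memL2.sub this).integrable_sq
  have tm : TendstoInMeasure (volume.restrict Omega) (fun n p => (u p - φ n p) ^ 2) atTop (fun _ => (0:ℝ)) := by
    refine tendstoInMeasure_of_tendsto_eLpNorm (p := 1) one_ne_zero (fun n => (hint n).1)
      aestronglyMeasurable_const ?_
    have e : ∀ n, eLpNorm ((fun p => (u p - φ n p) ^ 2) - fun _ => (0:ℝ)) 1 (volume.restrict Omega) =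
        ENNReal.ofReal (∫ p in Omega, (u p - φ n p) ^ 2) := by
      intro n
      have e0 : ((fun p => (u p - φ n p) ^ 2) - fun _ => (0:ℝ)) = fun p => (u p - φ n p) ^ 2 := by
        ext p; simp
      rw [e0, eLpNorm_one_eq_lintegral_enorm, ← ofReal_integral_norm_eq_lintegral_enorm (hint n)]
      simp
    simp_rw [e]
    simpa using ENNReal.tendsto_ofReal t1
  obtain ⟨ns, hns, hae⟩ := tm.exists_seq_tendsto_ae
  refine ⟨fun n => φ (ns n), fun n => hφ _, t2.comp hns.tendsto_atTop, t3.comp hns.tendsto_atTop, ?_⟩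
  filter_upwards [hae] with p hp
  have h1 : Tendsto (fun n => |u p - φ (ns n) p|) atTop (nhds 0) := by
    have := (Real.continuous_sqrt.tendsto 0).comp hp
    simpa [Function.comp_def, Real.sqrt_sq_eq_abs] using this
  have h2 := (tendsto_zero_iff_abs_tendsto_zero _).2 h1
  have h3 := h2.const_sub (u p)
  simpa using h3

lemma memLp_bdd_mul {X : Type*} [MeasurableSpace X] {μ : Measure X} {b h : X → ℝ} (L : ℝ)
    (hh : MemLp h 2 μ) (hb : AEStronglyMeasurable b μ) (hL : ∀ p, |b p| ≤ L) :
    MemLp (fun p => b p * h p) 2 μ := by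
  refine MemLp.of_le_mul (c := L) hh (hb.mul hh.1) (ae_of_all _ fun p => ?_)
  rw [norm_mul]
  gcongr
  exact hL p

lemma core (e : ℝ × ℝ) (w : ℝ × ℝ → ℝ) (hwm : Measurable w) (hwc : ContinuousOn w Omega)
    (hw : ∀ p ∈ Omega, 0 < w p ∧ w p ≤ 1) (u g : ℝ × ℝ → ℝ)
    (hu : AEStronglyMeasurable u (volume.restrict Omega))
    (hwg : MemLp (fun p => w p * g p) 2 (volume.restrict Omega))
    (φ : ℕ → ℝ × ℝ → ℝ) (hφ : ∀ n, IsTest (φ n))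
    (hconv : Tendsto (fun n => ∫ p in Omega, (w p * (g p - fderiv ℝ (φ n) p e)) ^ 2) atTop (nhds 0))
    (hae : ∀ᵐ p ∂(volume.restrict Omega), Tendsto (fun n => φ n p) atTop (nhds (u p)))
    (G : ℝ → ℝ) (L d : ℝ) (hG : ContDiff ℝ (⊤ : ℕ∞) G) (hG0 : G 0 = 0) (hd : ∀ t, |G t| ≤ d)
    (hL : ∀ t, 0 ≤ deriv G t ∧ deriv G t ≤ L) :
    MemLp (fun p => w p * (deriv G (u p) * g p)) 2 (volume.restrict Omega) ∧
    (∀ n, MemLp (fun p => w p * (deriv G (u p) * g p - fderiv ℝ (fun p => G (φ n p)) p e)) 2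
      (volume.restrict Omega)) ∧
    Tendsto (fun n => ∫ p in Omega,
      (w p * (deriv G (u p) * g p - fderiv ℝ (fun p => G (φ n p)) p e)) ^ 2) atTop (nhds 0) ∧
    ∀ ψ, IsTest ψ → ∫ p in Omega, G (u p) * fderiv ℝ ψ p e =
      - ∫ p in Omega, (deriv G (u p) * g p) * ψ p := by
  have hL0 : 0 ≤ L := (hL 0).1.trans (hL 0).2
  have hGc : Continuous G := hG.continuous
  have hdc : Continuous (deriv G) := hG.continuous_deriv (by simp)
  have hdu : AEStronglyMeasurable (fun p => deriv G (u p)) (volume.restrict Omega) :=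
    hdc.comp_aestronglyMeasurable hu
  have hGu : AEStronglyMeasurable (fun p => G (u p)) (volume.restrict Omega) :=
    hGc.comp_aestronglyMeasurable hu
  have hLabs : ∀ t, |deriv G t| ≤ L := fun t => by rw [abs_of_nonneg (hL t).1]; exact (hL t).2
  have hdcont : ∀ ψ, IsTest ψ → Continuous (fun p => fderiv ℝ ψ p e) := fun ψ h =>
    (h.1.continuous_fderiv (by simp)).clm_apply continuous_const
  have hdcs : ∀ ψ, IsTest ψ → HasCompactSupport (fun p => fderiv ℝ ψ p e) := fun ψ h =>
    h.2.1.fderiv_apply (𝕜 := ℝ) e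
  have hwP : ∀ ψ, IsTest ψ → MemLp (fun p => w p * fderiv ℝ ψ p e) 2 (volume.restrict Omega) :=
    fun ψ h => memLp_weight w _ hwm hw (hdcont ψ h) (hdcs ψ h)
  have M1 : MemLp (fun p => w p * (deriv G (u p) * g p)) 2 (volume.restrict Omega) := by
    have := memLp_bdd_mul L hwg hdu (fun p => hLabs _)
    refine (memLp_congr_ae (ae_of_all _ fun p => ?_)).1 this
    ring
  have M2 : ∀ n, MemLp (fun p => w p * (deriv G (u p) * g p - fderiv ℝ (fun p => G (φ n p)) p e)) 2
      (volume.restrict Omega) := by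
    intro n
    have := M1.sub (hwP _ (isTest_comp (hφ n) hG hG0))
    refine (memLp_congr_ae (ae_of_all _ fun p => ?_)).1 this
    simp only [Pi.sub_apply]; ring
  have hdφ : ∀ n, AEStronglyMeasurable (fun p => deriv G (φ n p)) (volume.restrict Omega) :=
    fun n => (hdc.comp (hφ n).1.continuous).aestronglyMeasurable
  have T : Tendsto (fun n => ∫ p in Omega,
      (w p * (deriv G (u p) * g p - fderiv ℝ (fun p => G (φ n p)) p e)) ^ 2) atTop (nhds 0) := by
    have N1 : ∀ n, MemLp (fun p => (deriv G (u p) - deriv G (φ n p)) * (w p * g p)) 2 (volume.restrict Omega) :=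
      fun n => memLp_bdd_mul L hwg (hdu.sub (hdφ n)) (fun p => by
        have := hL (u p); have := hL (φ n p); rw [abs_le]; constructor <;> linarith)
    have N2 : ∀ n, MemLp (fun p => w p * (g p - fderiv ℝ (φ n) p e)) 2 (volume.restrict Omega) := by
      intro n
      have := hwg.sub (hwP _ (hφ n))
      refine (memLp_congr_ae (ae_of_all _ fun p => ?_)).1 this
      simp only [Pi.sub_apply]; ring
    have D1 : Tendsto (fun n => ∫ p in Omega, ((deriv G (u p) - deriv G (φ n p)) * (w p * g p)) ^ 2)
        atTop (nhds 0) := by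
      have := tendsto_integral_of_dominated_convergence (μ := volume.restrict Omega)
        (F := fun n p => ((deriv G (u p) - deriv G (φ n p)) * (w p * g p)) ^ 2)
        (f := fun _ => (0:ℝ)) (fun p => L ^ 2 * (w p * g p) ^ 2) (fun n => (N1 n).integrable_sq.1)
        (hwg.integrable_sq.const_mul _) (fun n => ae_of_all _ fun p => ?_) ?_
      · simpa using this
      · rw [Real.norm_of_nonneg (sq_nonneg _), mul_pow]
        gcongr ?_ * _
        rw [← sq_abs]
        gcongr
        have := hL (u p); have := hL (φ n p); rw [abs_le]; constructor <;> linarith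
      · filter_upwards [hae] with p hp
        have h1 : Tendsto (fun n => deriv G (φ n p)) atTop (nhds (deriv G (u p))) :=
          (hdc.tendsto _).comp hp
        have h2 := ((h1.const_sub (deriv G (u p))).mul_const (w p * g p)).pow 2
        simpa using h2
    have D2 : Tendsto (fun n => 2 * (∫ p in Omega, ((deriv G (u p) - deriv G (φ n p)) * (w p * g p)) ^ 2) +
        2 * L ^ 2 * ∫ p in Omega, (w p * (g p - fderiv ℝ (φ n) p e)) ^ 2) atTop (nhds 0) := by
      simpa using (D1.const_mul 2).add (hconv.const_mul (2 * L ^ 2))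
    refine squeeze_zero (fun n => integral_nonneg fun p => sq_nonneg _) (fun n => ?_) D2
    rw [← integral_const_mul, ← integral_const_mul, ← integral_add
      ((N1 n).integrable_sq.const_mul _) ((N2 n).integrable_sq.const_mul _)]
    refine integral_mono (M2 n).integrable_sq
      (((N1 n).integrable_sq.const_mul _).add ((N2 n).integrable_sq.const_mul _)) fun p => ?_
    simp only [Pi.add_apply]
    rw [fderiv_comp_test (hφ n) hG]
    set a := deriv G (u p); set b := deriv G (φ n p); set P := fderiv ℝ (φ n) p e
    have e1 : w p * (a * g p - b * P) = (a - b) * (w p * g p) + b * (w p * (g p - P)) := by ring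
    rw [e1]
    have hb : b ^ 2 ≤ L ^ 2 := by
      have := hL (φ n p)
      exact pow_le_pow_left₀ this.1 this.2 2
    have h3 : (b * (w p * (g p - P))) ^ 2 ≤ L ^ 2 * (w p * (g p - P)) ^ 2 := by
      rw [mul_pow]; gcongr
    nlinarith [sq_nonneg ((a - b) * (w p * g p) - b * (w p * (g p - P)))]
  refine ⟨M1, M2, T, fun ψ hψ => ?_⟩
  -- integration by parts for the approximants
  have hn : ∀ n, ∫ p in Omega, G (φ n p) * fderiv ℝ ψ p e =
      - ∫ p in Omega, fderiv ℝ (fun p => G (φ n p)) p e * ψ p := by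
    intro n
    have ht := isTest_comp (hφ n) hG hG0
    have z1 : ∫ p in Omega, G (φ n p) * fderiv ℝ ψ p e = ∫ p, G (φ n p) * fderiv ℝ ψ p e :=
      setIntegral_eq_integral_of_forall_compl_eq_zero fun p hp => by
        have := ht.zero hp
        rw [this, zero_mul]
    have z2 : ∫ p in Omega, fderiv ℝ (fun p => G (φ n p)) p e * ψ p =
        ∫ p, fderiv ℝ (fun p => G (φ n p)) p e * ψ p :=
      setIntegral_eq_integral_of_forall_compl_eq_zero fun p hp => by rw [hψ.zero hp, mul_zero]
    rw [z1, z2]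
    refine integral_mul_fderiv_eq_neg_fderiv_mul_of_integrable ?_ ?_ ?_ ?_ ?_
    · exact ((hdcont _ ht).mul hψ.1.continuous).integrable_of_hasCompactSupport (hψ.2.1.mul_left)
    · exact (ht.1.continuous.mul (hdcont _ hψ)).integrable_of_hasCompactSupport ((hdcs _ hψ).mul_left)
    · exact (ht.1.continuous.mul hψ.1.continuous).integrable_of_hasCompactSupport (hψ.2.1.mul_left)
    · exact fun x _ => ht.1.differentiable (by simp) x
    · exact fun x _ => hψ.1.differentiable (by simp) x
  have lim1 : Tendsto (fun n => ∫ p in Omega, G (φ n p) * fderiv ℝ ψ p e) atTop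
      (nhds (∫ p in Omega, G (u p) * fderiv ℝ ψ p e)) := by
    refine tendsto_integral_of_dominated_convergence (fun p => d * ‖fderiv ℝ ψ p e‖)
      (fun n => ((hGc.comp (hφ n).1.continuous).mul (hdcont _ hψ)).aestronglyMeasurable) ?_
      (fun n => ae_of_all _ fun p => ?_) ?_
    · exact (((hdcont _ hψ).integrable_of_hasCompactSupport (hdcs _ hψ)).norm.const_mul d).integrableOn
    · rw [norm_mul]; gcongr; exact hd _
    · filter_upwards [hae] with p hp
      exact ((hGc.tendsto _).comp hp).mul_const _
  -- ψ / w is in L²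
  have hq : MemLp (fun p => ψ p / w p) 2 (volume.restrict Omega) := by
    obtain ⟨C, hC⟩ := hψ.1.continuous.bounded_above_of_compact_support hψ.2.1
    obtain ⟨δ, hδ, hδw⟩ : ∃ δ : ℝ, 0 < δ ∧ ∀ p ∈ tsupport ψ, δ ≤ w p := by
      rcases (tsupport ψ).eq_empty_or_nonempty with h | h
      · exact ⟨1, one_pos, by simp [h]⟩
      · obtain ⟨p0, hp0, hmin⟩ := IsCompact.exists_isMinOn hψ.2.1 h (hwc.mono hψ.2.2)
        exact ⟨w p0, (hw p0 (hψ.2.2 hp0)).1, fun p hp => hmin hp⟩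
    refine MemLp.of_bound (C := C / δ) (hψ.1.continuous.measurable.div hwm).aestronglyMeasurable
      (ae_of_all _ fun p => ?_)
    have hC0 : 0 ≤ C := (norm_nonneg _).trans (hC p)
    by_cases hp : p ∈ tsupport ψ
    · have := hδw p hp
      rw [norm_div, Real.norm_of_nonneg (hδ.le.trans this)]
      gcongr
      exact hC p
    · rw [image_eq_zero_of_notMem_tsupport hp]; simp; positivity
  have prodeq : ∀ F : ℝ × ℝ → ℝ, ∫ p in Omega, F p * ψ p = ∫ p in Omega, (w p * F p) * (ψ p / w p) := by
    intro F
    refine setIntegral_congr_fun measurableSet_Omega fun p hp => ?_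
    have := (hw p hp).1.ne'
    field_simp
  have lim2 : Tendsto (fun n => ∫ p in Omega, fderiv ℝ (fun p => G (φ n p)) p e * ψ p) atTop
      (nhds (∫ p in Omega, (deriv G (u p) * g p) * ψ p)) := by
    rw [tendsto_iff_norm_sub_tendsto_zero]
    have hb : Tendsto (fun n => Real.sqrt (∫ p in Omega,
      (w p * (deriv G (u p) * g p - fderiv ℝ (fun p => G (φ n p)) p e)) ^ 2) *
      Real.sqrt (∫ p in Omega, (ψ p / w p) ^ 2)) atTop (nhds 0) := by
      have := ((Real.continuous_sqrt.tendsto 0).comp T).mul_const (Real.sqrt (∫ p in Omega, (ψ p / w p) ^ 2))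
      simpa [Function.comp_def] using this
    refine squeeze_zero (fun n => norm_nonneg _) (fun n => ?_) hb
    refine le_trans (le_of_eq ?_) (CS (M2 n) hq)
    have ia : Integrable (fun p => w p * (deriv G (u p) * g p) * (ψ p / w p)) (volume.restrict Omega) :=
      M1.integrable_mul hq
    have ib : Integrable (fun p => w p * (fderiv ℝ (fun p => G (φ n p)) p e) * (ψ p / w p))
        (volume.restrict Omega) := (hwP _ (isTest_comp (hφ n) hG hG0)).integrable_mul hq
    rw [norm_sub_rev, Real.norm_eq_abs, prodeq, prodeq, ← integral_sub ia ib]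
    congr 1
    refine integral_congr_ae (ae_of_all _ fun p => ?_)
    simp only; ring
  have lim3 := lim2.neg
  simp_rw [← hn] at lim3
  exact tendsto_nhds_unique lim1 lim3

lemma sq_lim_zero_aux {d : ℝ} {G : ℝ → ℝ} (hGc : Continuous G) (hd : ∀ t, |G t| ≤ d)
    {u : ℝ × ℝ → ℝ} (hu : AEStronglyMeasurable u (volume.restrict Omega))
    {φ : ℕ → ℝ × ℝ → ℝ} (hφ : ∀ n, IsTest (φ n))
    (hae : ∀ᵐ p ∂(volume.restrict Omega), Tendsto (fun n => φ n p) atTop (nhds (u p))) :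
    Tendsto (fun n => ∫ p in Omega, (G (u p) - G (φ n p)) ^ 2) atTop (nhds 0) := by
  have := tendsto_integral_of_dominated_convergence (μ := volume.restrict Omega)
    (F := fun n p => (G (u p) - G (φ n p)) ^ 2)
    (f := fun _ => (0:ℝ)) (fun p => (2 * d) ^ 2) (fun n => ?_)
    (integrable_const _) (fun n => ae_of_all _ fun p => ?_) ?_
  · simpa using this
  · exact ((hGc.comp_aestronglyMeasurable hu).sub
      (hGc.comp (hφ n).1.continuous).aestronglyMeasurable).pow 2
  · rw [Real.norm_of_nonneg (sq_nonneg _), ← sq_abs]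
    gcongr
    have h1 := abs_le.1 (hd (u p)); have h2 := abs_le.1 (hd (φ n p))
    rw [abs_le]; constructor <;> linarith
  · filter_upwards [hae] with p hp
    have h1 : Tendsto (fun n => G (φ n p)) atTop (nhds (G (u p))) := (hGc.tendsto _).comp hp
    have h2 := (h1.const_sub (G (u p))).pow 2
    simpa using h2

lemma locInt_mul {b g : ℝ × ℝ → ℝ} {L : ℝ} (hb : AEStronglyMeasurable b (volume.restrict Omega))
    (hL : ∀ p, |b p| ≤ L) (hg : LocallyIntegrableOn g Omega volume) :
    LocallyIntegrableOn (fun p => b p * g p) Omega volume := by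
  intro x hx
  obtain ⟨s, hs, hi⟩ := hg x hx
  refine ⟨s ∩ Omega, inter_mem hs self_mem_nhdsWithin, ?_⟩
  have h1 : IntegrableOn g (s ∩ Omega) := hi.mono_set inter_subset_left
  refine Integrable.bdd_mul (c := L) h1 (hb.mono_measure (Measure.restrict_mono inter_subset_right le_rfl)) ?_
  exact ae_of_all _ fun p => hL p

lemma wcont1 (α : ℝ) : ContinuousOn (fun p : ℝ × ℝ => p.2 ^ α) Omega :=
  continuousOn_snd.rpow_const fun p hp => Or.inl (ne_of_gt hp.2.1)

lemma wcont2 (α : ℝ) : ContinuousOn (fun p : ℝ × ℝ => p.1 ^ α) Omega :=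
  continuousOn_fst.rpow_const fun p hp => Or.inl (ne_of_gt hp.1.1)

lemma sq_dom {X : Type*} [MeasurableSpace X] {μ : Measure X} {a b : X → ℝ} {w : X → ℝ}
    (h1 : MemLp (fun p => w p * a p) 2 μ) (h2 : MemLp (fun p => w p * (a p - b p)) 2 μ) :
    ∫ p, (w p * b p) ^ 2 ∂μ ≤ 2 * (∫ p, (w p * a p) ^ 2 ∂μ) + 2 * ∫ p, (w p * (a p - b p)) ^ 2 ∂μ := by
  have h3 : MemLp (fun p => w p * b p) 2 μ := by
    refine (memLp_congr_ae (ae_of_all _ fun p => ?_)).1 (h1.sub h2)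
    simp only [Pi.sub_apply]; ring
  rw [← integral_const_mul, ← integral_const_mul, ← integral_add
      (h1.integrable_sq.const_mul _) (h2.integrable_sq.const_mul _)]
  refine integral_mono h3.integrable_sq
      ((h1.integrable_sq.const_mul _).add (h2.integrable_sq.const_mul _)) fun p => ?_
  simp only
  nlinarith [sq_nonneg (w p * a p - w p * (a p - b p) + w p * a p), sq_nonneg (w p * a p + w p * (a p - b p))]

lemma trunc {α₁ α₂ : ℝ} (hα₁ : 0 < α₁) (hα₂ : 0 < α₂) {u gx gy : ℝ × ℝ → ℝ}
    (hu : MemH10 α₁ α₂ u gx gy)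
    (G : ℝ → ℝ) (L d : ℝ) (hG : ContDiff ℝ (⊤ : ℕ∞) G) (hG0 : G 0 = 0) (hd : ∀ t, |G t| ≤ d)
    (hL : ∀ t, 0 ≤ deriv G t ∧ deriv G t ≤ L)
    (s K : ℝ) (hs : 1 < s)
    (hK : ∀ φ : ℝ × ℝ → ℝ, IsTest φ → ∫ p in Omega, |φ p| ^ (4 * s) ≤
      K * ((∫ p in Omega, (p.2 ^ α₁ * pdx φ p) ^ 2) + (∫ p in Omega, (p.1 ^ α₂ * pdy φ p) ^ 2)) ^ (2 * s))
    (hK0 : 0 ≤ K) :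
    MemH10 α₁ α₂ (fun p => G (u p)) (fun p => deriv G (u p) * gx p) (fun p => deriv G (u p) * gy p) ∧
    ∫ p in Omega, |G (u p)| ^ (4 * s) ≤ K * (2 * ((∫ p in Omega, (p.2 ^ α₁ * (deriv G (u p) * gx p)) ^ 2) +
      (∫ p in Omega, (p.1 ^ α₂ * (deriv G (u p) * gy p)) ^ 2))) ^ (2 * s) := by
  obtain ⟨φ, hφ, hx, hy, hae⟩ := approx hα₁ hα₂ hu
  have hum := hu.1.memL2.1
  have hGc : Continuous G := hG.continuous
  have hdc : Continuous (deriv G) := hG.continuous_deriv (by simp)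
  have hLabs : ∀ t, |deriv G t| ≤ L := fun t => by rw [abs_of_nonneg (hL t).1]; exact (hL t).2
  have hdu : AEStronglyMeasurable (fun p => deriv G (u p)) (volume.restrict Omega) :=
    hdc.comp_aestronglyMeasurable hum
  have hGu : AEStronglyMeasurable (fun p => G (u p)) (volume.restrict Omega) :=
    hGc.comp_aestronglyMeasurable hum
  obtain ⟨A1, A2, A3, A4⟩ := core (1, 0) (fun p => p.2 ^ α₁) (by fun_prop) (wcont1 α₁)
    (fun p hp => Omega_weight1 hα₁ hp) u gx hum hu.1.wgx φ hφ hx hae G L d hG hG0 hd hL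
  obtain ⟨B1, B2, B3, B4⟩ := core (0, 1) (fun p => p.1 ^ α₂) (by fun_prop) (wcont2 α₂)
    (fun p hp => Omega_weight2 hα₂ hp) u gy hum hu.1.wgy φ hφ hy hae G L d hG hG0 hd hL
  have T0 := sq_lim_zero_aux hGc hd hum hφ hae
  have hGL2 : MemLp (fun p => G (u p)) 2 (volume.restrict Omega) :=
    MemLp.of_bound hGu d (ae_of_all _ fun p => hd _)
  have hloc : LocallyIntegrableOn (fun p => G (u p)) Omega volume :=
    IntegrableOn.locallyIntegrableOn (hGL2.integrable (by norm_num))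
  have ht := fun n => isTest_comp (hφ n) hG hG0
  refine ⟨⟨⟨hGL2, ⟨hloc, locInt_mul hdu (fun p => hLabs _) hu.1.weakX.2.1, A4⟩,
    ⟨hloc, locInt_mul hdu (fun p => hLabs _) hu.1.weakY.2.1, B4⟩, A1, B1⟩, ?_⟩, ?_⟩
  · intro ε hε
    have T := (T0.add A3).add B3
    simp only [add_zero] at T
    obtain ⟨n, hn⟩ := (T.eventually (gt_mem_nhds (pow_pos hε 2))).exists
    exact ⟨_, ht n, (Real.sqrt_lt' hε).2 hn⟩
  · have l1 : Tendsto (fun n => ∫ p in Omega, |G (φ n p)| ^ (4 * s)) atTop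
        (nhds (∫ p in Omega, |G (u p)| ^ (4 * s))) := by
      have hc : Continuous (fun t => |G t| ^ (4 * s)) :=
        hGc.abs.rpow_const fun t => Or.inr (by linarith)
      refine tendsto_integral_of_dominated_convergence (fun _ => d ^ (4 * s))
        (fun n => (hc.comp (hφ n).1.continuous).aestronglyMeasurable) (integrable_const _)
        (fun n => ae_of_all _ fun p => ?_) ?_
      · rw [Real.norm_of_nonneg (by positivity)]
        exact Real.rpow_le_rpow (abs_nonneg _) (hd _) (by linarith)
      · filter_upwards [hae] with p hp
        exact (hc.tendsto _).comp hp
    set E1 := ∫ p in Omega, (p.2 ^ α₁ * (deriv G (u p) * gx p)) ^ 2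
    set E2 := ∫ p in Omega, (p.1 ^ α₂ * (deriv G (u p) * gy p)) ^ 2
    have l2 := ((((A3.add B3).const_mul 2).const_add (2 * (E1 + E2))).rpow_const
      (p := 2 * s) (Or.inr (by linarith))).const_mul K
    simp only [add_zero, mul_zero] at l2
    refine le_of_tendsto_of_tendsto' l1 l2 fun n => (hK _ (ht n)).trans ?_
    have q1 := sq_dom A1 (A2 n)
    have q2 := sq_dom B1 (B2 n)
    have r1 : ∫ p in Omega, (p.2 ^ α₁ * pdx (fun p => G (φ n p)) p) ^ 2 ≤ _ := q1
    have r2 : ∫ p in Omega, (p.1 ^ α₂ * pdy (fun p => G (φ n p)) p) ^ 2 ≤ _ := q2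
    refine mul_le_mul_of_nonneg_left (Real.rpow_le_rpow ?_ ?_ (by linarith)) hK0
    · have i1 : 0 ≤ ∫ p in Omega, (p.2 ^ α₁ * pdx (fun p => G (φ n p)) p) ^ 2 :=
        integral_nonneg fun p => sq_nonneg _
      have i2 : 0 ≤ ∫ p in Omega, (p.1 ^ α₂ * pdy (fun p => G (φ n p)) p) ^ 2 :=
        integral_nonneg fun p => sq_nonneg _
      linarith
    · linarith

lemma arith_step {d s K c a b : ℝ} (hd : 0 < d) (hc : 0 ≤ c) (hb : 0 ≤ b)
    (h : d ^ (4 * s) * a ≤ K * (c * (d * Real.sqrt b)) ^ (2 * s)) :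
    a ≤ K * c ^ (2 * s) * d ^ (-(2 * s)) * b ^ (2 * s / 2) := by
  have e1 : (Real.sqrt b) ^ (2 * s) = b ^ (2 * s / 2) := by
    rw [Real.sqrt_eq_rpow, ← Real.rpow_mul hb]; congr 1; ring
  rw [Real.mul_rpow hc (by positivity), Real.mul_rpow hd.le (Real.sqrt_nonneg _), e1] at h
  have hp : 0 < d ^ (4 * s) := Real.rpow_pos_of_pos hd _
  have e2 : d ^ (2 * s) = d ^ (4 * s) * d ^ (-(2 * s)) := by
    rw [← Real.rpow_add hd]; congr 1; ring
  rw [e2] at h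
  refine le_of_mul_le_mul_left (h.trans (le_of_eq ?_)) hp
  ring

lemma energy (α₁ α₂ ppow : ℝ) (hα₁ : 0 < α₁) (hα₂ : 0 < α₂) (hp : 1 < ppow) (V : ℝ × ℝ → ℝ)
    (hV : MemLp V (ENNReal.ofReal ppow) (volume.restrict Omega))
    (hVpos : ∀ᵐ p ∂(volume.restrict Omega), 0 ≤ V p)
    (f : ℝ × ℝ → ℝ) (hf : MemLp f 2 (volume.restrict Omega))
    (u gx gy : ℝ × ℝ → ℝ) (hu : MemH0 α₁ α₂ V u gx gy)
    (hsol : ∀ v hx hy : ℝ × ℝ → ℝ, MemH0 α₁ α₂ V v hx hy →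
      aForm α₁ α₂ V u gx gy v hx hy = ∫ p in Omega, f p * v p)
    (G : ℝ → ℝ) (L d : ℝ) (hGc : Continuous G) (hd : ∀ t, |G t| ≤ d) (hm : ∀ t, 0 ≤ t * G t)
    (hL : ∀ t, 0 ≤ deriv G t ∧ deriv G t ≤ L)
    (hGu : MemH10 α₁ α₂ (fun p => G (u p)) (fun p => deriv G (u p) * gx p) (fun p => deriv G (u p) * gy p)) :
    (∫ p in Omega, (p.2 ^ α₁ * (deriv G (u p) * gx p)) ^ 2) +
      (∫ p in Omega, (p.1 ^ α₂ * (deriv G (u p) * gy p)) ^ 2) ≤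
      L * (Real.sqrt (∫ p in Omega, (f p) ^ 2) * Real.sqrt (∫ p in Omega, (G (u p)) ^ 2)) := by
  have hL0 : 0 ≤ L := (hL 0).1.trans (hL 0).2
  have hum := hu.1.1.memL2.1
  have hGm : AEStronglyMeasurable (fun p => G (u p)) (volume.restrict Omega) :=
    hGc.comp_aestronglyMeasurable hum
  have hVi : Integrable V (volume.restrict Omega) :=
    hV.integrable (by rw [← ENNReal.ofReal_one]; exact ENNReal.ofReal_le_ofReal hp.le)
  have hd0 : 0 ≤ d := (abs_nonneg _).trans (hd 0)
  have hV2 : IntegrableOn (fun p => V p * (G (u p)) ^ 2) Omega volume := by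
    refine Integrable.mono (hVi.mul_const (d ^ 2)) (hVi.1.mul (hGm.pow 2)) (ae_of_all _ fun p => ?_)
    rw [norm_mul, norm_mul]
    gcongr
    rw [Real.norm_of_nonneg (sq_nonneg _), Real.norm_of_nonneg (sq_nonneg _), ← sq_abs]
    gcongr
    exact hd _
  have hs := hsol _ _ _ ⟨hGu, hV2⟩
  have hVu : Integrable (fun p => V p * u p * G (u p)) (volume.restrict Omega) := by
    have h1 : Integrable (fun p => V p * u p ^ 2) (volume.restrict Omega) := hu.2
    refine Integrable.mono (h1.add (hVi.mul_const (d ^ 2))) ((hVi.1.mul hum).mul hGm) ?_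
    filter_upwards [hVpos] with p hp
    simp only [Pi.add_apply]
    rw [← mul_add, mul_assoc, norm_mul (V p), norm_mul (V p)]
    refine mul_le_mul_of_nonneg_left ?_ (norm_nonneg _)
    rw [norm_mul, Real.norm_eq_abs, Real.norm_eq_abs, Real.norm_of_nonneg (by positivity)]
    have h2 : |u p| * |G (u p)| ≤ |u p| * d := by gcongr; exact hd _
    nlinarith [sq_nonneg (|u p| - d), sq_abs (u p), sq_nonneg (|u p|), sq_nonneg d]
  have I1 : Integrable (fun p => (p.2 ^ α₁ * gx p) * (p.2 ^ α₁ * (deriv G (u p) * gx p)))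
    (volume.restrict Omega) := hu.1.1.wgx.integrable_mul hGu.1.wgx
  have I2 : Integrable (fun p => (p.1 ^ α₂ * gy p) * (p.1 ^ α₂ * (deriv G (u p) * gy p)))
    (volume.restrict Omega) := hu.1.1.wgy.integrable_mul hGu.1.wgy
  have hle : (∫ p in Omega, (p.2 ^ α₁ * (deriv G (u p) * gx p)) ^ 2) +
      (∫ p in Omega, (p.1 ^ α₂ * (deriv G (u p) * gy p)) ^ 2) ≤ L * ∫ p in Omega, f p * G (u p) := by
    rw [← hs, aForm, ← integral_const_mul, ← integral_add hGu.1.wgx.integrable_sq hGu.1.wgy.integrable_sq]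
    refine integral_mono_ae (hGu.1.wgx.integrable_sq.add hGu.1.wgy.integrable_sq)
      (((I1.add I2).add hVu).const_mul L) ?_
    filter_upwards [hVpos] with p hp
    obtain ⟨a0, a1⟩ := hL (u p)
    set a := deriv G (u p)
    have h1 : (p.2 ^ α₁ * (a * gx p)) ^ 2 ≤ L * ((p.2 ^ α₁ * gx p) * (p.2 ^ α₁ * (a * gx p))) := by
      have : 0 ≤ (L - a) * a * (p.2 ^ α₁ * gx p) ^ 2 :=
        mul_nonneg (mul_nonneg (by linarith) a0) (sq_nonneg _)
      linarith
    have h2 : (p.1 ^ α₂ * (a * gy p)) ^ 2 ≤ L * ((p.1 ^ α₂ * gy p) * (p.1 ^ α₂ * (a * gy p))) := by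
      have : 0 ≤ (L - a) * a * (p.1 ^ α₂ * gy p) ^ 2 :=
        mul_nonneg (mul_nonneg (by linarith) a0) (sq_nonneg _)
      linarith
    have h3 : 0 ≤ L * (V p * u p * G (u p)) := by
      rw [mul_assoc (V p)]
      exact mul_nonneg hL0 (mul_nonneg hp (hm _))
    linarith
  refine hle.trans (mul_le_mul_of_nonneg_left ((le_abs_self _).trans (CS hf hGu.1.memL2)) hL0)

lemma bounded_of_sol (α₁ α₂ ppow : ℝ)
    (hα₁ : α₁ ∈ Ioo (0:ℝ) (1/2)) (hα₂ : α₂ ∈ Ioo (0:ℝ) (1/2))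
    (hp : 1 < ppow) (V : ℝ × ℝ → ℝ)
    (hV : MemLp V (ENNReal.ofReal ppow) (volume.restrict Omega))
    (hVpos : ∀ᵐ p ∂(volume.restrict Omega), 0 ≤ V p)
    (f : ℝ × ℝ → ℝ) (hf : MemLp f 2 (volume.restrict Omega))
    (u gx gy : ℝ × ℝ → ℝ) (hu : MemH0 α₁ α₂ V u gx gy)
    (hsol : ∀ v hx hy : ℝ × ℝ → ℝ, MemH0 α₁ α₂ V v hx hy →
      aForm α₁ α₂ V u gx gy v hx hy = ∫ p in Omega, f p * v p) :
    ∃ M : ℝ, 0 ≤ M ∧ ∀ᵐ p ∂(volume.restrict Omega), |u p| ≤ M := by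
  obtain ⟨s, hs, K, hK0, hK⟩ := sobolev α₁ α₂ hα₁ hα₂
  obtain ⟨L, hL0, hL⟩ := Gtr_deriv
  have hum := hu.1.1.memL2.1
  set F := Real.sqrt (∫ p in Omega, (f p) ^ 2)
  have hF : 0 ≤ F := Real.sqrt_nonneg _
  have hvol : (volume.restrict Omega).real univ ≤ 1 := by
    simp [Measure.real, Omega, Measure.volume_eq_prod]
  have key : ∀ k d : ℝ, 0 ≤ k → 0 < d → (volume.restrict Omega).real {p | k + d < |u p|} ≤
      K * (2 * L * F) ^ (2 * s) * d ^ (-(2 * s)) * (volume.restrict Omega).real {p | k < |u p|} ^ (2 * s / 2) := by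
    intro k d hk hd
    have hGd := fun t => Gtr_le k d t hk hd
    have hG0 : Gtr k d 0 = 0 := Gtr_zero k d 0 hd (by simpa using hk)
    have hGc := (Gtr_contDiff k d).continuous
    obtain ⟨hGu, hest⟩ := trunc hα₁.1 hα₂.1 hu.1 (Gtr k d) L d (Gtr_contDiff k d) hG0 hGd
      (fun t => hL k d t hd) s K hs hK hK0
    have hen := energy α₁ α₂ ppow hα₁.1 hα₂.1 hp V hV hVpos f hf u gx gy hu hsol (Gtr k d) L d hGc hGd
      (fun t => Gtr_mul k d t hk hd) (fun t => hL k d t hd) hGu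
    set Φ := (volume.restrict Omega).real {p | k < |u p|} with hΦ
    have hΦ0 : 0 ≤ Φ := measureReal_nonneg
    have hA : NullMeasurableSet {p | k < |u p|} (volume.restrict Omega) :=
      nullMeasurableSet_lt aemeasurable_const hum.norm.aemeasurable
    have hsq : ∫ p in Omega, (Gtr k d (u p)) ^ 2 ≤ d ^ 2 * Φ := by
      have e : ∫ p, ({p | k < |u p|}).indicator (fun _ => d ^ 2) p ∂(volume.restrict Omega) = d ^ 2 * Φ := by
        rw [integral_indicator₀ hA, setIntegral_const, smul_eq_mul, mul_comm]
      rw [← e]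
      refine integral_mono hGu.1.memL2.integrable_sq ((integrable_const _).indicator₀ hA) fun p => ?_
      by_cases h : k < |u p|
      · rw [indicator_of_mem (by exact h), ← sq_abs]
        have := hGd (u p)
        gcongr
      · rw [indicator_of_notMem (by exact h)]
        simp only
        rw [Gtr_zero k d _ hd (not_lt.1 h)]
        simp
    have hsqrt : Real.sqrt (∫ p in Omega, (Gtr k d (u p)) ^ 2) ≤ d * Real.sqrt Φ := by
      refine (Real.sqrt_le_sqrt hsq).trans (le_of_eq ?_)
      rw [Real.sqrt_mul (sq_nonneg _), Real.sqrt_sq hd.le]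
    have hint : Integrable (fun p => |Gtr k d (u p)| ^ (4 * s)) (volume.restrict Omega) := by
      have hc : Continuous (fun t => |Gtr k d t| ^ (4 * s)) :=
        hGc.abs.rpow_const fun t => Or.inr (by linarith)
      refine Integrable.mono' (integrable_const (d ^ (4 * s))) (hc.comp_aestronglyMeasurable hum)
        (ae_of_all _ fun p => ?_)
      rw [Real.norm_of_nonneg (by positivity)]
      exact Real.rpow_le_rpow (abs_nonneg _) (hGd _) (by linarith)
    have hcheb := mul_meas_ge_le_integral_of_nonneg (ae_of_all _ fun p => by positivity) hint (d ^ (4 * s))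
    have hsub : (volume.restrict Omega).real {p | k + d < |u p|} ≤
        (volume.restrict Omega).real {p | d ^ (4 * s) ≤ |Gtr k d (u p)| ^ (4 * s)} := by
      refine measureReal_mono fun p (hp : k + d < |u p|) => ?_
      simp only [mem_setOf_eq]
      rw [Gtr_eq k d _ hk hd hp.le]
    refine arith_step hd (by positivity) hΦ0 ?_
    calc d ^ (4 * s) * (volume.restrict Omega).real {p | k + d < |u p|}
        ≤ d ^ (4 * s) * (volume.restrict Omega).real {p | d ^ (4 * s) ≤ |Gtr k d (u p)| ^ (4 * s)} := by
          gcongr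
      _ ≤ _ := hcheb
      _ ≤ _ := hest
      _ ≤ _ := by
        refine mul_le_mul_of_nonneg_left (Real.rpow_le_rpow ?_ ?_ (by linarith)) hK0
        · exact mul_nonneg (by norm_num) (add_nonneg (integral_nonneg fun p => sq_nonneg _)
            (integral_nonneg fun p => sq_nonneg _))
        · have : L * (F * Real.sqrt (∫ p in Omega, (Gtr k d (u p)) ^ 2)) ≤ L * (F * (d * Real.sqrt Φ)) := by
            gcongr
          linarith
  obtain ⟨M, hM0, hM⟩ := iter_vanish (fun k => (volume.restrict Omega).real {p | k < |u p|})
    (fun k => measureReal_nonneg)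
    (fun k l hkl => measureReal_mono fun p (hp : l < |u p|) => lt_of_le_of_lt hkl hp)
    ((measureReal_mono (subset_univ _)).trans hvol) (K * (2 * L * F) ^ (2 * s)) (2 * s)
    (by positivity) (by linarith) key
  · refine ⟨M, hM0, ?_⟩
    have h0 : (volume.restrict Omega) {p | M < |u p|} = 0 := by
      rwa [measureReal_eq_zero_iff] at hM
    rw [ae_iff]
    simpa only [not_le] using h0

end Aux

/-- Local boundedness of weak solutions: if `u ∈ H₀(Ω)` is a weak
solution of `Lu = f`, then for any `s₀` and `r > 0` with `closedBall s₀ (4r) ⊆ Ω`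
there is `C > 0` with `ess sup_{B_r(s₀)} |u| ≤ C (‖u‖_{L²(B_{2r}(s₀))} + ‖f‖_{L²(Ω)})`. -/
theorem local_boundedness (α₁ α₂ ppow : ℝ)
    (hα₁ : α₁ ∈ Ioo (0:ℝ) (1/2)) (hα₂ : α₂ ∈ Ioo (0:ℝ) (1/2))
    (hp : 1 < ppow) (V : ℝ × ℝ → ℝ)
    (hV : MemLp V (ENNReal.ofReal ppow) (volume.restrict Omega))
    (hVpos : ∀ᵐ p ∂(volume.restrict Omega), 0 ≤ V p)
    (f : ℝ × ℝ → ℝ) (hf : MemLp f 2 (volume.restrict Omega))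
    (u gx gy : ℝ × ℝ → ℝ) (hu : MemH0 α₁ α₂ V u gx gy)
    (hsol : ∀ v hx hy : ℝ × ℝ → ℝ, MemH0 α₁ α₂ V v hx hy →
      aForm α₁ α₂ V u gx gy v hx hy = ∫ p in Omega, f p * v p)
    (s₀ : ℝ × ℝ) (r : ℝ) (hr : 0 < r)
    (hball : Metric.closedBall s₀ (4*r) ⊆ Omega) :
    ∃ C : ℝ, 0 < C ∧ ∀ᵐ p ∂(volume.restrict (Metric.ball s₀ r)),
      |u p| ≤ C * (Real.sqrt (∫ q in Metric.ball s₀ (2*r), (u q) ^ 2) +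
        Real.sqrt (∫ q in Omega, (f q) ^ 2)) := by
  obtain ⟨M, hM0, hM⟩ := bounded_of_sol α₁ α₂ ppow hα₁ hα₂ hp V hV hVpos f hf u gx gy hu hsol
  set S := Real.sqrt (∫ q in Metric.ball s₀ (2*r), (u q) ^ 2) +
        Real.sqrt (∫ q in Omega, (f q) ^ 2) with hS
  have h1 : 0 ≤ Real.sqrt (∫ q in Metric.ball s₀ (2*r), (u q) ^ 2) := Real.sqrt_nonneg _
  have h2 : 0 ≤ Real.sqrt (∫ q in Omega, (f q) ^ 2) := Real.sqrt_nonneg _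
  have hb2 : Metric.ball s₀ (2*r) ⊆ Omega := fun p hp => hball
    (Metric.closedBall_subset_closedBall (by linarith) (Metric.ball_subset_closedBall hp))
  have hb1 : Metric.ball s₀ r ⊆ Metric.ball s₀ (2*r) := Metric.ball_subset_ball (by linarith)
  rcases (add_nonneg h1 h2).eq_or_lt with h0 | h0
  · refine ⟨1, one_pos, ?_⟩
    have hz : Real.sqrt (∫ q in Metric.ball s₀ (2*r), (u q) ^ 2) = 0 := by linarith
    have hi : Integrable (fun q => (u q) ^ 2) (volume.restrict (Metric.ball s₀ (2*r))) :=
      hu.1.1.memL2.integrable_sq.mono_measure (Measure.restrict_mono hb2 le_rfl)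
    rw [Real.sqrt_eq_zero (integral_nonneg fun q => sq_nonneg _),
      integral_eq_zero_iff_of_nonneg (fun q => sq_nonneg _) hi] at hz
    have hz' := ae_mono (Measure.restrict_mono hb1 (le_refl volume)) hz
    filter_upwards [hz'] with p hp
    have : u p = 0 := by simpa using hp
    rw [this, abs_zero, one_mul]
    exact add_nonneg h1 h2
  · refine ⟨(M + 1) / S, div_pos (by linarith) h0, ?_⟩
    have hM' := ae_mono (Measure.restrict_mono (hb1.trans hb2) (le_refl volume)) hM
    filter_upwards [hM'] with p hp
    rw [div_mul_cancel₀ _ (ne_of_gt h0)]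
    linarith
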